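/- arXiv:1508.01918 — 3 statements merged into one kernel-verified Lean document; each statement's English description precedes it below -/
import Mathlib

section
/- For every dimension N ≥ 1, every degree k ∈ ℕ, every s ∈ {1, …, k+1}, every p ∈ [1, +∞], and every ρ > 0, there exists a constant C > 0 depending only on N, ρ, k, s and p such that: for every open bounded set U ⊆ ℝ^N with diameter h_U which is star-shaped with respect to a ball of radius ρ·h_U, every function v smooth on an open neighbourhood of the closure of U, and every m ∈ {0, …, s}, one has |v − π_U^k v|_{W^{m,p}(U)} ≤ C · h_U^{s−m} · |v|_{W^{s,p}(U)}, where π_U^k v is the L^2-projection of v onto polynomials of total degree at most k. -/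
open MeasureTheory Metric Set
open scoped ENNReal

noncomputable section

/-- `w : ℝ^N → ℝ` is (given by) a multivariate polynomial of total degree at most `k`. -/
def IsPolyDegLE (N k : ℕ) (w : EuclideanSpace ℝ (Fin N) → ℝ) : Prop :=
  ∃ P : MvPolynomial (Fin N) ℝ, P.totalDegree ≤ k ∧ ∀ x, w x = MvPolynomial.eval (fun i => x i) P

/-- `U` is star-shaped with respect to a ball of radius `ρ * diam U`. -/
def StarShapedWrtBall {N : ℕ} (ρ : ℝ) (U : Set (EuclideanSpace ℝ (Fin N))) : Prop :=
  ∃ c, Metric.ball c (ρ * Metric.diam U) ⊆ U ∧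
    ∀ x ∈ Metric.ball c (ρ * Metric.diam U), ∀ y ∈ U, segment ℝ x y ⊆ U

/-- The `W^{m,p}(U)`-seminorm of `v`: the `L^p(U)`-norm of the norm of the `m`-th iterated
derivative. -/
def sobSemi {N : ℕ} (m : ℕ) (p : ℝ≥0∞) (U : Set (EuclideanSpace ℝ (Fin N)))
    (v : EuclideanSpace ℝ (Fin N) → ℝ) : ℝ≥0∞ :=
  eLpNorm (fun x => ‖iteratedFDeriv ℝ m v x‖) p (volume.restrict U)

section Poincare

open intervalIntegral

lemma aux_lintegral_scale {N : ℕ} (H : EuclideanSpace ℝ (Fin N) → ℝ≥0∞) (hH : Measurable H)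
    (a : EuclideanSpace ℝ (Fin N)) {t : ℝ} (ht : 1 / 2 ≤ t) :
    ∫⁻ x, H (a + t • x) ≤ ENNReal.ofReal (2 ^ N) * ∫⁻ x, H x := by
  have ht0 : 0 < t := by linarith
  have h1 : ∫⁻ x, H (a + t • x) = ∫⁻ x, H (a + x) ∂(Measure.map (t • ·) volume) := by
    rw [lintegral_map (by fun_prop) (by fun_prop)]
  rw [h1, Measure.map_addHaar_smul _ ht0.ne', lintegral_smul_measure, lintegral_add_left_eq_self]
  simp only [smul_eq_mul]
  gcongr
  rw [finrank_euclideanSpace, Fintype.card_fin, abs_of_pos (by positivity), ← inv_pow]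
  gcongr
  rw [inv_le_comm₀ ht0 (by norm_num)]
  linarith

lemma aux_segment {N : ℕ} {F : Type*} [NormedAddCommGroup F] [NormedSpace ℝ F] [CompleteSpace F]
    (U : Set (EuclideanSpace ℝ (Fin N))) (hU : IsOpen U) (g : EuclideanSpace ℝ (Fin N) → F)
    (hg : ContDiffOn ℝ 1 g U) {h : ℝ} (x y : EuclideanSpace ℝ (Fin N)) (hxy : ‖x - y‖ ≤ h)
    (hseg : segment ℝ y x ⊆ U) :
    ‖g x - g y‖ₑ ≤ ENNReal.ofReal h *
      ∫⁻ t in Icc (0:ℝ) 1, U.indicator (fun z => ‖fderiv ℝ g z‖ₑ) (y + t • (x - y)) := by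
  have hmem : ∀ t ∈ Icc (0:ℝ) 1, y + t • (x - y) ∈ U := by
    intro t ht
    apply hseg
    rw [segment_eq_image']
    exact ⟨t, ht, rfl⟩
  have hderiv : ∀ t ∈ uIcc (0:ℝ) 1, HasDerivAt (fun t : ℝ => g (y + t • (x - y)))
      (fderiv ℝ g (y + t • (x - y)) (x - y)) t := by
    intro t ht
    rw [uIcc_of_le zero_le_one] at ht
    have h1 : HasFDerivAt g (fderiv ℝ g (y + t • (x - y))) (y + t • (x - y)) :=
      ((hg.differentiableOn one_ne_zero).differentiableAt (hU.mem_nhds (hmem t ht))).hasFDerivAt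
    have h2 : HasDerivAt (fun t : ℝ => y + t • (x - y)) (x - y) t := by
      simpa using ((hasDerivAt_id t).smul_const (x - y)).const_add y
    exact h1.comp_hasDerivAt t h2
  have hcont : ContinuousOn (fun t : ℝ => fderiv ℝ g (y + t • (x - y)) (x - y)) (uIcc (0:ℝ) 1) := by
    rw [uIcc_of_le zero_le_one]
    have := (hg.continuousOn_fderiv_of_isOpen hU le_rfl).comp
      (f := fun t : ℝ => y + t • (x - y)) (s := Icc (0:ℝ) 1) (by fun_prop) hmem
    exact this.clm_apply continuousOn_const
  have hint := integral_eq_sub_of_hasDerivAt hderiv hcont.intervalIntegrable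
  simp only [one_smul, add_sub_cancel, zero_smul, add_zero] at hint
  rw [← hint, integral_of_le zero_le_one, ← MeasureTheory.integral_Icc_eq_integral_Ioc,
    ← lintegral_const_mul' _ _ ENNReal.ofReal_ne_top]
  refine (enorm_integral_le_lintegral_enorm _).trans ?_
  refine setLIntegral_mono' measurableSet_Icc fun t ht => ?_
  rw [indicator_of_mem (hmem t ht), mul_comm]
  refine (ContinuousLinearMap.le_opENorm _ _).trans ?_
  gcongr
  rw [← ofReal_norm]
  gcongr

lemma aux_indicator_meas {N : ℕ} {F : Type*} [NormedAddCommGroup F] [NormedSpace ℝ F]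
    (U : Set (EuclideanSpace ℝ (Fin N))) (hU : IsOpen U) (g : EuclideanSpace ℝ (Fin N) → F)
    (hg : ContDiffOn ℝ 1 g U) :
    Measurable (U.indicator (fun z => ‖fderiv ℝ g z‖ₑ)) := by
  classical
  have h1 : ContinuousOn (fun z => ‖fderiv ℝ g z‖ₑ) U :=
    (hg.continuousOn_fderiv_of_isOpen hU le_rfl).enorm
  have := h1.measurable_piecewise (g := fun _ => (0:ℝ≥0∞)) continuousOn_const hU.measurableSet
  rwa [← Set.piecewise_eq_indicator]

/-- normalized measure on a set -/
def nu {N : ℕ} (B : Set (EuclideanSpace ℝ (Fin N))) : Measure (EuclideanSpace ℝ (Fin N)) :=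
  (volume B)⁻¹ • volume.restrict B

lemma nu_prob {N : ℕ} (B : Set (EuclideanSpace ℝ (Fin N))) (h0 : volume B ≠ 0)
    (h1 : volume B ≠ ⊤) : IsProbabilityMeasure (nu B) := by
  constructor
  simp [nu, ENNReal.inv_mul_cancel h0 h1]

lemma aux_front {N : ℕ} {F : Type*} [NormedAddCommGroup F] [NormedSpace ℝ F] [CompleteSpace F]
    (U B : Set (EuclideanSpace ℝ (Fin N))) (hU : IsOpen U) (hB : MeasurableSet B)
    (h0 : volume B ≠ 0) (h1 : volume B ≠ ⊤)
    (g : EuclideanSpace ℝ (Fin N) → F)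
    (hg : ContDiffOn ℝ 1 g U) {h : ℝ} (hgi : IntegrableOn g B) (hgz : ∫ y in B, g y = 0)
    (x : EuclideanSpace ℝ (Fin N)) (hxy : ∀ y ∈ B, ‖x - y‖ ≤ h)
    (hseg : ∀ y ∈ B, segment ℝ y x ⊆ U) :
    ‖g x‖ₑ ≤ ENNReal.ofReal h * ∫⁻ z, U.indicator (fun z => ‖fderiv ℝ g z‖ₑ)
      (z.1 + z.2 • (x - z.1)) ∂((nu B).prod (volume.restrict (Icc (0:ℝ) 1))) := by
  have := nu_prob B h0 h1
  have hm := aux_indicator_meas U hU g hg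
  have hgi' : Integrable g (nu B) := hgi.smul_measure (by simpa using h0)
  have e1 : ∫ y, (g x - g y) ∂(nu B) = g x := by
    rw [MeasureTheory.integral_sub (integrable_const _) hgi']
    simp [nu, MeasureTheory.integral_smul_measure, hgz]
    rw [measureReal_def, ← ENNReal.toReal_inv, ← ENNReal.toReal_mul, ENNReal.inv_mul_cancel h0 h1]
    simp
  rw [lintegral_prod _ (by apply Measurable.aemeasurable; apply hm.comp; fun_prop)]
  rw [← lintegral_const_mul' _ _ ENNReal.ofReal_ne_top]
  conv_lhs => rw [← e1]
  refine (enorm_integral_le_lintegral_enorm _).trans ?_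
  refine lintegral_mono_ae ?_
  refine Measure.ae_smul_measure ?_ _
  filter_upwards [ae_restrict_mem hB] with y hy
  exact aux_segment U hU g hg x y (hxy y hy) (hseg y hy)

lemma aux_triple {N : ℕ} (U B : Set (EuclideanSpace ℝ (Fin N)))
    (h0 : volume B ≠ 0) (h1 : volume B ≠ ⊤) (K : ℝ≥0∞) (hK : volume U ≤ K * volume B)
    (H : EuclideanSpace ℝ (Fin N) → ℝ≥0∞) (hH : Measurable H) (t : ℝ) :
    ∫⁻ y, (∫⁻ x in U, H (y + t • (x - y))) ∂(nu B) ≤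
      (ENNReal.ofReal (2 ^ N) * (1 + K)) * ∫⁻ x, H x := by
  have := nu_prob B h0 h1
  rcases le_or_gt (1 / 2) t with ht | ht
  · calc ∫⁻ y, (∫⁻ x in U, H (y + t • (x - y))) ∂(nu B)
        ≤ ∫⁻ y, (ENNReal.ofReal (2 ^ N) * ∫⁻ x, H x) ∂(nu B) := by
          refine lintegral_mono fun y => ?_
          refine (setLIntegral_le_lintegral _ _).trans ?_
          refine le_trans (le_of_eq ?_) (aux_lintegral_scale H hH (y - t • y) ht)
          congr 1; ext x; congr 1; module
      _ = ENNReal.ofReal (2 ^ N) * 1 * ∫⁻ x, H x := by simp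
      _ ≤ _ := by gcongr; exact le_self_add
  · rw [lintegral_lintegral_swap (by apply Measurable.aemeasurable; apply hH.comp; fun_prop)]
    calc ∫⁻ x in U, ∫⁻ y, H (y + t • (x - y)) ∂(nu B)
        ≤ ∫⁻ x in U, (volume B)⁻¹ * (ENNReal.ofReal (2 ^ N) * ∫⁻ x, H x) := by
          refine lintegral_mono fun x => ?_
          rw [nu, lintegral_smul_measure, smul_eq_mul]
          gcongr
          refine (setLIntegral_le_lintegral _ _).trans ?_
          refine le_trans (le_of_eq ?_)
            (aux_lintegral_scale H hH (t • x) (t := 1 - t) (by linarith))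
          congr 1; ext x; congr 1; module
      _ = (volume B)⁻¹ * volume U * (ENNReal.ofReal (2 ^ N) * ∫⁻ x, H x) := by
          simp; ring
      _ ≤ (volume B)⁻¹ * (K * volume B) * (ENNReal.ofReal (2 ^ N) * ∫⁻ x, H x) := by gcongr
      _ = ENNReal.ofReal (2 ^ N) * K * ∫⁻ x, H x := by
          have := ENNReal.inv_mul_cancel h0 h1
          calc _ = ((volume B)⁻¹ * volume B) * (ENNReal.ofReal (2 ^ N) * K * ∫⁻ x, H x) := by ring
            _ = _ := by rw [this, one_mul]
      _ ≤ _ := by gcongr; exact le_add_self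

lemma aux_jensen {α : Type*} [MeasurableSpace α] (μ : Measure α) [IsProbabilityMeasure μ]
    (f : α → ℝ≥0∞) (hf : Measurable f) {p : ℝ} (hp : 1 ≤ p) :
    (∫⁻ x, f x ∂μ) ^ p ≤ ∫⁻ x, f x ^ p ∂μ := by
  have hp0 : 0 < p := by linarith
  have h := eLpNorm_le_eLpNorm_of_exponent_le (μ := μ) (f := f) (p := 1) (q := ENNReal.ofReal p)
    (by rw [← ENNReal.ofReal_one]; exact ENNReal.ofReal_le_ofReal hp) hf.aestronglyMeasurable
  rw [eLpNorm_one_eq_lintegral_enorm, eLpNorm_eq_lintegral_rpow_enorm_toReal (by simpa using hp0)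
    (by simp), ENNReal.toReal_ofReal hp0.le] at h
  simp only [enorm_eq_self] at h
  calc _ ≤ _ := ENNReal.rpow_le_rpow h hp0.le
    _ = _ := by rw [← ENNReal.rpow_mul, one_div, inv_mul_cancel₀ hp0.ne', ENNReal.rpow_one]

lemma aux_poincare {N : ℕ} {F : Type*} [NormedAddCommGroup F] [NormedSpace ℝ F] [CompleteSpace F]
    (U B : Set (EuclideanSpace ℝ (Fin N))) (hU : IsOpen U) (hB : MeasurableSet B)
    (h0 : volume B ≠ 0) (h1 : volume B ≠ ⊤) (K : ℝ≥0∞) (hK : volume U ≤ K * volume B)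
    (g : EuclideanSpace ℝ (Fin N) → F)
    (hg : ContDiffOn ℝ 1 g U) {h : ℝ} (hgi : IntegrableOn g B) (hgz : ∫ y in B, g y = 0)
    (hxy : ∀ x ∈ U, ∀ y ∈ B, ‖x - y‖ ≤ h)
    (hseg : ∀ x ∈ U, ∀ y ∈ B, segment ℝ y x ⊆ U) (p : ℝ≥0∞) (hp : 1 ≤ p) :
    eLpNorm g p (volume.restrict U) ≤ ENNReal.ofReal h * (ENNReal.ofReal (2 ^ N) * (1 + K)) *
      eLpNorm (fderiv ℝ g) p (volume.restrict U) := by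
  have := nu_prob B h0 h1
  have hprob : IsProbabilityMeasure (volume.restrict (Icc (0:ℝ) 1)) := ⟨by simp⟩
  have hm := aux_indicator_meas U hU g hg
  have hfront := fun x hx => aux_front U B hU hB h0 h1 g hg hgi hgz x (hxy x hx) (hseg x hx)
  set A := ENNReal.ofReal (2 ^ N) * (1 + K) with hA
  have hA1 : 1 ≤ A := by
    rw [hA]
    refine one_le_mul_of_one_le_of_one_le ?_ (le_self_add)
    rw [← ENNReal.ofReal_one]; exact ENNReal.ofReal_le_ofReal (one_le_pow₀ (by norm_num))
  set G := U.indicator (fun z => ‖fderiv ℝ g z‖ₑ) with hG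
  by_cases hpt : p = ⊤
  · subst hpt
    have hle : ∀ z, G z ≤ eLpNorm (fderiv ℝ g) ⊤ (volume.restrict U) := by
      intro z
      by_cases hz : z ∈ U
      swap
      · simp [hG, hz]
      by_contra! hlt
      set M := eLpNorm (fderiv ℝ g) ⊤ (volume.restrict U) with hM
      have hco : ContinuousOn (fun z => ‖fderiv ℝ g z‖ₑ) U :=
        (hg.continuousOn_fderiv_of_isOpen hU le_rfl).enorm
      have hop : IsOpen (U ∩ (fun z => ‖fderiv ℝ g z‖ₑ) ⁻¹' Ioi M) :=
        hco.isOpen_inter_preimage hU isOpen_Ioi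
      have hzero : (volume : Measure (EuclideanSpace ℝ (Fin N))) (U ∩ (fun z => ‖fderiv ℝ g z‖ₑ) ⁻¹' Ioi M) = 0 := by
        have : ∀ᵐ x ∂(volume.restrict U), ‖fderiv ℝ g x‖ₑ ≤ M := by
          rw [hM, eLpNorm_exponent_top]
          exact enorm_ae_le_eLpNormEssSup _ _
        rw [ae_restrict_iff' hU.measurableSet] at this
        refine measure_mono_null ?_ this
        intro y hy
        simp only [mem_compl_iff, mem_ofPred_eq, Classical.not_imp, not_le]
        exact ⟨hy.1, hy.2⟩
      replace hzero := (hop.measure_eq_zero_iff volume).1 hzero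
      have : z ∈ U ∩ (fun z => ‖fderiv ℝ g z‖ₑ) ⁻¹' Ioi M := ⟨hz, by simpa [hG, hz] using hlt⟩
      rw [hzero] at this
      exact this
    rw [eLpNorm_exponent_top (f := g)]
    refine eLpNormEssSup_le_of_ae_enorm_bound ?_
    filter_upwards [ae_restrict_mem hU.measurableSet] with x hx
    refine (hfront x hx).trans ?_
    calc _ ≤ ENNReal.ofReal h * ∫⁻ z, eLpNorm (fderiv ℝ g) ⊤ (volume.restrict U)
            ∂((nu B).prod (volume.restrict (Icc (0:ℝ) 1))) := by
          gcongr with z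
          exact hle _
      _ = ENNReal.ofReal h * 1 * eLpNorm (fderiv ℝ g) ⊤ (volume.restrict U) := by simp
      _ ≤ _ := by gcongr
  · have hp0 : p ≠ 0 := (zero_lt_one.trans_le hp).ne'
    have hpr : 1 ≤ p.toReal := by
      rw [← ENNReal.toReal_one]; exact ENNReal.toReal_mono hpt hp
    set r := p.toReal
    have hr0 : 0 < r := by linarith
    rw [eLpNorm_eq_lintegral_rpow_enorm_toReal hp0 hpt,
      eLpNorm_eq_lintegral_rpow_enorm_toReal hp0 hpt]
    have hH : Measurable (fun z => G z ^ r) := hm.pow_const r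
    have key : ∫⁻ x in U, ‖g x‖ₑ ^ r ≤
        (ENNReal.ofReal h) ^ r * (A * ∫⁻ x in U, ‖fderiv ℝ g x‖ₑ ^ r) := by
      calc ∫⁻ x in U, ‖g x‖ₑ ^ r
          ≤ ∫⁻ x in U, (ENNReal.ofReal h) ^ r * ∫⁻ z, G (z.1 + z.2 • (x - z.1)) ^ r
              ∂((nu B).prod (volume.restrict (Icc (0:ℝ) 1))) := by
            refine setLIntegral_mono' hU.measurableSet fun x hx => ?_
            refine (ENNReal.rpow_le_rpow (hfront x hx) hr0.le).trans ?_
            rw [ENNReal.mul_rpow_of_nonneg _ _ hr0.le]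
            gcongr
            exact aux_jensen _ _ (hm.comp (by fun_prop)) hpr
        _ = (ENNReal.ofReal h) ^ r * ∫⁻ x in U, ∫⁻ z, G (z.1 + z.2 • (x - z.1)) ^ r
              ∂((nu B).prod (volume.restrict (Icc (0:ℝ) 1))) := by
            rw [lintegral_const_mul' _ _ (ENNReal.rpow_ne_top_of_nonneg hr0.le ENNReal.ofReal_ne_top)]
        _ = (ENNReal.ofReal h) ^ r * ∫⁻ t in Icc (0:ℝ) 1, ∫⁻ y, (∫⁻ x in U,
              G (y + t • (x - y)) ^ r) ∂(nu B) := by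
            rw [lintegral_lintegral_swap
              (by apply Measurable.aemeasurable; apply hH.comp; fun_prop), lintegral_prod_symm]
            apply Measurable.aemeasurable
            apply Measurable.lintegral_prod_right'
              (f := fun q : (EuclideanSpace ℝ (Fin N) × ℝ) × EuclideanSpace ℝ (Fin N) =>
                G (q.1.1 + q.1.2 • (q.2 - q.1.1)) ^ r)
            apply hH.comp; fun_prop
        _ ≤ (ENNReal.ofReal h) ^ r * ∫⁻ t in Icc (0:ℝ) 1, A * ∫⁻ x, G x ^ r := by
            gcongr with t
            exact aux_triple U B h0 h1 K hK (fun z => G z ^ r) hH t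
        _ = (ENNReal.ofReal h) ^ r * (A * ∫⁻ x, G x ^ r) := by simp
        _ = _ := by
            congr 2
            rw [← lintegral_indicator hU.measurableSet]
            congr 1; ext x
            by_cases hx : x ∈ U <;> simp [hG, hx, hr0]
    calc _ ≤ _ := ENNReal.rpow_le_rpow key (by positivity)
      _ = ENNReal.ofReal h * (A ^ (1 / r) * (∫⁻ x in U, ‖fderiv ℝ g x‖ₑ ^ r) ^ (1 / r)) := by
          rw [ENNReal.mul_rpow_of_nonneg _ _ (by positivity),
            ENNReal.mul_rpow_of_nonneg _ _ (by positivity), ← ENNReal.rpow_mul, mul_one_div,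
            div_self hr0.ne', ENNReal.rpow_one]
      _ ≤ ENNReal.ofReal h * (A * (∫⁻ x in U, ‖fderiv ℝ g x‖ₑ ^ r) ^ (1 / r)) := by
          gcongr
          conv_rhs => rw [← ENNReal.rpow_one A]
          apply ENNReal.rpow_le_rpow_of_exponent_le hA1
          rw [div_le_one hr0]; exact hpr
      _ = _ := by rw [← mul_assoc (ENNReal.ofReal h) A]

end Poincare

section Symm

variable {E : Type*} [NormedAddCommGroup E] [NormedSpace ℝ E]

lemma norm_fderiv_const_zero {F : Type*} [NormedAddCommGroup F] [NormedSpace ℝ F] (c : F) (x : E) :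
    ‖fderiv ℝ (fun _ : E => c) x‖ = 0 := by simp

lemma fderiv_fderiv_comp {F : Type*} [NormedAddCommGroup F] [NormedSpace ℝ F] (Φ : E → F)
    (l : F →L[ℝ] ℝ) {x : E} (hd : DifferentiableAt ℝ (fderiv ℝ Φ) x) (a b : E) :
    fderiv ℝ (fun y => l (fderiv ℝ Φ y b)) x a = l (fderiv ℝ (fderiv ℝ Φ) x a b) := by
  have h3 := ((l.comp (ContinuousLinearMap.apply ℝ _ b)).hasFDerivAt.comp x
            hd.hasFDerivAt).fderiv
  have h2 : (fun y => l (fderiv ℝ Φ y b)) =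
    (l.comp (ContinuousLinearMap.apply ℝ _ b)) ∘ (fderiv ℝ Φ) := rfl
  rw [h2, h3]
  rfl

lemma smooth_iter {v : E → ℝ} {V : Set E} (hV : IsOpen V)
    (hv : ContDiffOn ℝ (⊤ : ℕ∞) v V) (n : ℕ) :
    ContDiffOn ℝ (⊤ : ℕ∞) (iteratedFDeriv ℝ n v) V := by
  intro x hx
  refine ContDiffAt.contDiffWithinAt ?_
  refine (hv.contDiffAt (hV.mem_nhds hx)).iteratedFDeriv_right ?_
  exact le_rfl

lemma fderiv_iter_apply {v : E → ℝ} {V : Set E} (hV : IsOpen V)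
    (hv : ContDiffOn ℝ (⊤ : ℕ∞) v V) (n : ℕ) {x : E} (hx : x ∈ V) (a : E) (w : Fin n → E) :
    fderiv ℝ (iteratedFDeriv ℝ n v) x a w = fderiv ℝ (fun y => iteratedFDeriv ℝ n v y w) x a := by
  have hd : DifferentiableAt ℝ (iteratedFDeriv ℝ n v) x :=
    ((smooth_iter hV hv n).contDiffAt (hV.mem_nhds hx)).differentiableAt (by simp)
  have := ((ContinuousMultilinearMap.apply ℝ (fun _ : Fin n => E) ℝ w).hasFDerivAt.comp x
    hd.hasFDerivAt).fderiv
  have h2 : (fun y => iteratedFDeriv ℝ n v y w) =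
    (ContinuousMultilinearMap.apply ℝ (fun _ : Fin n => E) ℝ w) ∘ iteratedFDeriv ℝ n v := rfl
  rw [h2, this]
  rfl

lemma iter_swap {v : E → ℝ} {V : Set E} (hV : IsOpen V)
    (hv : ContDiffOn ℝ (⊤ : ℕ∞) v V) (n : ℕ) :
    ∀ (i : Fin n), ∀ x ∈ V, ∀ m : Fin (n + 1) → E,
      iteratedFDeriv ℝ (n + 1) v x (m ∘ Equiv.swap i.castSucc i.succ) =
        iteratedFDeriv ℝ (n + 1) v x m := by
  induction n with
  | zero => intro i; exact i.elim0
  | succ n ih =>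
    intro i x hx m
    refine Fin.cases ?_ (fun j => ?_) i
    · have hΦ := (smooth_iter hV hv n).contDiffAt (hV.mem_nhds hx)
      have hsym := hΦ.isSymmSndFDerivAt (by
        have h2 : ((2 : ℕ) : WithTop ℕ∞) ≤ ((⊤ : ℕ∞) : WithTop ℕ∞) := WithTop.coe_le_coe.2 le_top
        simpa using h2)
      have hd : DifferentiableAt ℝ (fderiv ℝ (iteratedFDeriv ℝ n v)) x :=
        (hΦ.fderiv_right (m := (⊤ : ℕ∞)) le_rfl).differentiableAt (by simp)
      have key : ∀ m : Fin (n + 2) → E, iteratedFDeriv ℝ (n + 2) v x m =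
          fderiv ℝ (fderiv ℝ (iteratedFDeriv ℝ n v)) x (m 0) (m 1) (Fin.tail (Fin.tail m)) := by
        intro m
        rw [iteratedFDeriv_succ_apply_left, fderiv_iter_apply hV hv _ hx]
        exact fderiv_fderiv_comp (iteratedFDeriv ℝ n v)
          (ContinuousMultilinearMap.apply ℝ (fun _ : Fin n => E) ℝ (Fin.tail (Fin.tail m)))
          hd (m 0) (m 1)
      rw [key, key]
      have e0 : (m ∘ Equiv.swap (Fin.castSucc (0 : Fin (n+1))) (Fin.succ 0)) 0 = m 1 := by
        simp
      have e1 : (m ∘ Equiv.swap (Fin.castSucc (0 : Fin (n+1))) (Fin.succ 0)) 1 = m 0 := by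
        simp
      have e2 : Fin.tail (Fin.tail (m ∘ Equiv.swap (Fin.castSucc (0 : Fin (n+1))) (Fin.succ 0)))
          = Fin.tail (Fin.tail m) := by
        ext k
        simp only [Fin.tail, Function.comp_apply]
        congr 1
      rw [e0, e1, e2, hsym]
    · rw [iteratedFDeriv_succ_apply_left, iteratedFDeriv_succ_apply_left,
        fderiv_iter_apply hV hv _ hx, fderiv_iter_apply hV hv _ hx]
      have e0 : (m ∘ Equiv.swap (Fin.castSucc j.succ) (Fin.succ j.succ)) 0 = m 0 := by
        simp only [Function.comp_apply]
        congr 1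
      have e1 : Fin.tail (m ∘ Equiv.swap (Fin.castSucc j.succ) (Fin.succ j.succ)) =
          Fin.tail m ∘ Equiv.swap j.castSucc j.succ := by
        ext k
        simp only [Fin.tail, Function.comp_apply]
        congr 1
        simp only [Equiv.swap_apply_def, Fin.ext_iff]
        split_ifs <;> simp_all
      rw [e0, e1]
      congr 1
      apply Filter.EventuallyEq.fderiv_eq
      filter_upwards [hV.mem_nhds hx] with y hy
      exact ih j y hy _

lemma iter_perm {v : E → ℝ} {V : Set E} (hV : IsOpen V)
    (hv : ContDiffOn ℝ (⊤ : ℕ∞) v V) (n : ℕ) (σ : Equiv.Perm (Fin n)) {x : E} (hx : x ∈ V) :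
    ∀ m : Fin n → E, iteratedFDeriv ℝ n v x (fun i => m (σ i)) = iteratedFDeriv ℝ n v x m := by
  cases n with
  | zero => intro m; congr 1; ext i; exact i.elim0
  | succ n =>
    have hσ : σ ∈ Submonoid.closure
        (Set.range fun i : Fin n => Equiv.swap i.castSucc i.succ) := by
      rw [Equiv.Perm.mclosure_swap_castSucc_succ]; trivial
    induction hσ using Submonoid.closure_induction with
    | mem σ h =>
      obtain ⟨i, rfl⟩ := h
      exact iter_swap hV hv n i x hx
    | one => intro m; rfl
    | mul a b _ _ iha ihb =>
      intro m
      rw [← iha m]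
      exact ihb (fun i => m (a i))

end Symm

section PolyApprox

lemma isPoly_mono {N k l : ℕ} (h : k ≤ l) {w} (hw : IsPolyDegLE N k w) : IsPolyDegLE N l w := by
  obtain ⟨P, h1, h2⟩ := hw
  exact ⟨P, h1.trans h, h2⟩

lemma isPoly_add {N k : ℕ} {w u} (hw : IsPolyDegLE N k w) (hu : IsPolyDegLE N k u) :
    IsPolyDegLE N k (fun x => w x + u x) := by
  obtain ⟨P, h1, h2⟩ := hw
  obtain ⟨Q, h3, h4⟩ := hu
  refine ⟨P + Q, (MvPolynomial.totalDegree_add _ _).trans (max_le h1 h3), fun x => ?_⟩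
  simp [h2, h4]

lemma isPoly_sub {N k : ℕ} {w u} (hw : IsPolyDegLE N k w) (hu : IsPolyDegLE N k u) :
    IsPolyDegLE N k (fun x => w x - u x) := by
  obtain ⟨P, h1, h2⟩ := hw
  obtain ⟨Q, h3, h4⟩ := hu
  refine ⟨P - Q, (MvPolynomial.totalDegree_sub _ _).trans (max_le h1 h3), fun x => ?_⟩
  simp [h2, h4]

lemma isPoly_contDiff {N k : ℕ} {w} (hw : IsPolyDegLE N k w) : ContDiff ℝ (⊤ : ℕ∞) w := by
  obtain ⟨P, -, h2⟩ := hw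
  have : w = fun x => ∑ d ∈ P.support, P.coeff d * ∏ i, x i ^ d i := by
    ext x; rw [h2, MvPolynomial.eval_eq']
  rw [this]
  fun_prop

lemma isPoly_diag {N n : ℕ} (A : EuclideanSpace ℝ (Fin N) [×n]→L[ℝ] ℝ) (a : ℝ) :
    IsPolyDegLE N n (fun x => a * A (fun _ => x)) := by
  classical
  refine ⟨∑ r : Fin n → Fin N, MvPolynomial.C (a * A (fun i => EuclideanSpace.single (r i) 1)) *
    ∏ i, MvPolynomial.X (r i), ?_, fun x => ?_⟩
  · refine MvPolynomial.totalDegree_finsetSum_le fun r _ => ?_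
    refine (MvPolynomial.totalDegree_mul _ _).trans ?_
    rw [MvPolynomial.totalDegree_C, zero_add]
    refine (MvPolynomial.totalDegree_finsetProd _ _).trans ?_
    simp
  · have hx : x = ∑ i, x i • EuclideanSpace.single i (1:ℝ) := by
      ext j
      simp [Finset.sum_apply, Pi.single_apply]
    change a * A (fun _ => x) = _
    conv_lhs => rw [hx]
    rw [A.map_sum (g := fun _ i => x i • EuclideanSpace.single i (1:ℝ)), Finset.mul_sum, map_sum]
    refine Finset.sum_congr rfl fun r _ => ?_
    rw [A.map_smul_univ (fun i => x (r i)) (fun i => EuclideanSpace.single (r i) 1)]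
    simp
    ring

lemma aux_exists_poly {N : ℕ} (V B : Set (EuclideanSpace ℝ (Fin N))) (hV : IsOpen V)
    (hBV : closure B ⊆ V) (hBb : Bornology.IsBounded B) (hBm : MeasurableSet B)
    (h0 : volume B ≠ 0) (n : ℕ) :
    ∀ v : EuclideanSpace ℝ (Fin N) → ℝ, ContDiffOn ℝ (⊤ : ℕ∞) v V →
    ∃ q, IsPolyDegLE N (n - 1) q ∧ (∀ x, iteratedFDeriv ℝ n q x = 0) ∧
      ∀ j < n, ∫ y in B, iteratedFDeriv ℝ j (fun x => v x - q x) y = 0 := by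
  have h1 : volume B ≠ ⊤ := hBb.measure_lt_top.ne
  have hcomp : IsCompact (closure B) := hBb.isCompact_closure
  induction n with
  | zero =>
    intro v hv
    refine ⟨fun _ => 0, ⟨0, by simp, by simp⟩, ?_, by simp⟩
    intro x; exact congrFun (iteratedFDeriv_fun_zero) x
  | succ n ih =>
    intro v hv
    have hint : IntegrableOn (iteratedFDeriv ℝ n v) B := by
      have hc : ContinuousOn (iteratedFDeriv ℝ n v) V :=
        (smooth_iter hV hv n).continuousOn
      exact ((hc.mono hBV).integrableOn_compact hcomp).mono_set subset_closure
    set A := ∫ y in B, iteratedFDeriv ℝ n v y with hA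
    set a : ℝ := (volume.real B)⁻¹ * (n.factorial : ℝ)⁻¹ with ha
    set qn : EuclideanSpace ℝ (Fin N) → ℝ := fun x => a * A (fun _ => x) with hqn
    have hqnP : IsPolyDegLE N n qn := isPoly_diag A a
    have hqnC := isPoly_contDiff hqnP
    have hsymm : ∀ (σ : Equiv.Perm (Fin n)) (m : Fin n → EuclideanSpace ℝ (Fin N)),
        A (fun i => m (σ i)) = A m := by
      intro σ m
      rw [hA, ContinuousMultilinearMap.integral_apply hint,
        ContinuousMultilinearMap.integral_apply hint]
      refine setIntegral_congr_fun hBm fun y hy => ?_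
      exact iter_perm hV hv n σ (hBV (subset_closure hy)) m
    have hDqn : ∀ x, iteratedFDeriv ℝ n qn x = (volume.real B)⁻¹ • A := by
      intro x
      have hcd : ContDiffAt ℝ n (fun x => A (fun _ => x)) x := by
        have := (isPoly_contDiff (isPoly_diag A 1))
        simp only [one_mul] at this
        exact (this.of_le (by exact_mod_cast le_top)).contDiffAt
      have : iteratedFDeriv ℝ n qn x = a • iteratedFDeriv ℝ n (fun x => A (fun _ => x)) x :=
        iteratedFDeriv_const_smul_apply (a := a) hcd
      rw [this]
      ext m
      rw [smul_apply, A.iteratedFDeriv_comp_diagonal]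
      simp only [hsymm]
      simp [Fintype.card_perm, ha]
      field_simp
    have hDqn1 : ∀ x, iteratedFDeriv ℝ (n + 1) qn x = 0 := by
      intro x
      rw [← norm_eq_zero, ← norm_fderiv_iteratedFDeriv]
      have : iteratedFDeriv ℝ n qn = fun _ => (volume.real B)⁻¹ • A := funext hDqn
      rw [this]; exact norm_fderiv_const_zero _ _
    obtain ⟨q', hq'P, hq'D, hq'I⟩ := ih (fun x => v x - qn x) (hv.sub hqnC.contDiffOn)
    have hq'C := isPoly_contDiff hq'P
    refine ⟨fun x => qn x + q' x, isPoly_add hqnP (isPoly_mono (by omega) hq'P), ?_, ?_⟩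
    · intro x
      have hq'1 : iteratedFDeriv ℝ (n + 1) q' x = 0 := by
        rw [← norm_eq_zero, ← norm_fderiv_iteratedFDeriv]
        have : iteratedFDeriv ℝ n q' = fun _ => 0 := funext hq'D
        rw [this]; exact norm_fderiv_const_zero _ _
      have := fun_iteratedFDeriv_add_apply (i := n + 1) (x := x) (hqnC.of_le (by exact_mod_cast le_top)).contDiffAt
        (hq'C.of_le (by exact_mod_cast le_top)).contDiffAt
      rw [this, hDqn1, hq'1, add_zero]
    · intro j hj
      have hfun : (fun x => v x - (qn x + q' x)) = fun x => (v x - qn x) - q' x := by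
        ext x; ring
      rw [hfun]
      rcases Nat.lt_succ_iff_lt_or_eq.1 hj with hj | rfl
      · exact hq'I j hj
      · have : ∀ y ∈ B, iteratedFDeriv ℝ j (fun x => v x - qn x - q' x) y =
            iteratedFDeriv ℝ j v y - (volume.real B)⁻¹ • A := by
          intro y hy
          have hvy : ContDiffAt ℝ j v y :=
            (hv.contDiffAt (hV.mem_nhds (hBV (subset_closure hy)))).of_le
              (by exact_mod_cast le_top)
          have hqy : ContDiffAt ℝ j qn y := (hqnC.of_le (by exact_mod_cast le_top)).contDiffAt
          have hq'y : ContDiffAt ℝ j q' y := (hq'C.of_le (by exact_mod_cast le_top)).contDiffAt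
          rw [fun_iteratedFDeriv_sub_apply (hvy.sub hqy) hq'y, fun_iteratedFDeriv_sub_apply hvy hqy,
            hDqn, hq'D, sub_zero]
        rw [setIntegral_congr_fun hBm this, integral_sub hint
          (integrableOn_const h1), ← hA]
        have hne : volume.real B ≠ 0 := by
          rw [measureReal_def]; exact ENNReal.toReal_ne_zero.2 ⟨h0, h1⟩
        rw [setIntegral_const, smul_smul, mul_inv_cancel₀ hne, one_smul, sub_self]

end PolyApprox

section NormEq

/-- evaluation of polynomials as functions -/
def evP (N : ℕ) : MvPolynomial (Fin N) ℝ →ₗ[ℝ] (EuclideanSpace ℝ (Fin N) → ℝ) where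
  toFun P := fun x => MvPolynomial.eval (fun i => x i) P
  map_add' P Q := by ext x; simp
  map_smul' a P := by ext x; simp

lemma evP_isPoly {N : ℕ} (P : MvPolynomial (Fin N) ℝ) : IsPolyDegLE N P.totalDegree (evP N P) :=
  ⟨P, le_rfl, fun _ => rfl⟩

lemma evP_contDiff {N : ℕ} (P : MvPolynomial (Fin N) ℝ) : ContDiff ℝ (⊤ : ℕ∞) (evP N P) :=
  isPoly_contDiff (evP_isPoly P)

lemma evP_analytic {N : ℕ} (P : MvPolynomial (Fin N) ℝ) : AnalyticOnNhd ℝ (evP N P) univ := by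
  have : evP N P = fun x => ∑ d ∈ P.support, P.coeff d * ∏ i, x i ^ d i := by
    ext x; exact MvPolynomial.eval_eq' _ _
  rw [this]
  intro x _
  have : ContDiffAt ℝ (⊤ : WithTop ℕ∞)
    (fun x : EuclideanSpace ℝ (Fin N) => ∑ d ∈ P.support, P.coeff d * ∏ i, x i ^ d i) x := by
    fun_prop
  exact this.analyticAt

lemma evP_memLp {N : ℕ} (ρ : ℝ) (P : MvPolynomial (Fin N) ℝ) :
    MemLp (evP N P) 2 (volume.restrict (ball (0 : EuclideanSpace ℝ (Fin N)) ρ)) := by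
  have hc := (evP_contDiff P).continuous
  obtain ⟨M, hM⟩ := (isCompact_closedBall (0 : EuclideanSpace ℝ (Fin N)) ρ).exists_bound_of_continuousOn
    hc.continuousOn
  have : IsFiniteMeasure (volume.restrict (ball (0 : EuclideanSpace ℝ (Fin N)) ρ)) :=
    ⟨by simpa using measure_ball_lt_top⟩
  refine MemLp.of_bound hc.aestronglyMeasurable M ?_
  filter_upwards [ae_restrict_mem measurableSet_ball] with x hx
  exact hM x (ball_subset_closedBall hx)

/-- polynomials as elements of L2 of a ball -/
def toL2 (N : ℕ) (ρ : ℝ) : MvPolynomial (Fin N) ℝ →ₗ[ℝ]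
    Lp ℝ 2 (volume.restrict (ball (0 : EuclideanSpace ℝ (Fin N)) ρ)) where
  toFun P := (evP_memLp ρ P).toLp _
  map_add' P Q := by
    rw [← MemLp.toLp_add]
    congr 1
    exact map_add _ _ _
  map_smul' a P := by
    rw [RingHom.id_apply, ← MemLp.toLp_const_smul]
    congr 1
    exact map_smul _ _ _

lemma toL2_inj (N : ℕ) {ρ : ℝ} (hρ : 0 < ρ) : Function.Injective (toL2 N ρ) := by
  rw [← LinearMap.ker_eq_bot, LinearMap.ker_eq_bot']
  intro P hP
  have h1 : evP N P =ᵐ[volume.restrict (ball (0 : EuclideanSpace ℝ (Fin N)) ρ)] 0 := by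
    have := (evP_memLp ρ P).coeFn_toLp
    have h2 : (evP_memLp ρ P).toLp = 0 := hP
    rw [h2] at this
    exact this.symm.trans (Lp.coeFn_zero _ _ _)
  have h2 : EqOn (evP N P) 0 (ball 0 ρ) :=
    Measure.eqOn_open_of_ae_eq h1 isOpen_ball (evP_contDiff P).continuous.continuousOn
      continuousOn_const
  have h3 := (evP_analytic P).eqOn_zero_of_preconnected_of_eventuallyEq_zero isPreconnected_univ
    (mem_univ (0 : EuclideanSpace ℝ (Fin N)))
    (h2.eventuallyEq_of_mem (ball_mem_nhds _ hρ))
  refine MvPolynomial.funext fun x => ?_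
  have := h3 (mem_univ (WithLp.toLp 2 x))
  simpa [evP] using this

lemma toL2_norm (N : ℕ) (ρ : ℝ) (P : MvPolynomial (Fin N) ℝ) :
    ‖toL2 N ρ P‖ ^ 2 = ∫ x in ball (0 : EuclideanSpace ℝ (Fin N)) ρ, (evP N P x) ^ 2 := by
  rw [← real_inner_self_eq_norm_sq, L2.inner_def]
  refine integral_congr_ae ?_
  filter_upwards [(evP_memLp ρ P).coeFn_toLp] with x hx
  have : (toL2 N ρ P : EuclideanSpace ℝ (Fin N) → ℝ) x = evP N P x := hx
  rw [this]; simp [sq]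

lemma norm_equiv_ref (N k s : ℕ) {ρ : ℝ} (hρ : 0 < ρ) :
    ∃ K : ℝ, 0 < K ∧ ∀ w, IsPolyDegLE N k w → ∀ m ≤ s,
      ∀ x ∈ closedBall (0 : EuclideanSpace ℝ (Fin N)) 1,
        ‖iteratedFDeriv ℝ m w x‖ ^ 2 ≤
          K * ∫ y in ball (0 : EuclideanSpace ℝ (Fin N)) ρ, (w y) ^ 2 := by
  classical
  let W := MvPolynomial.restrictTotalDegree (Fin N) ℝ k
  let b := Module.finBasis ℝ W
  let T := ((toL2 N ρ).comp W.subtype).comp b.equivFun.symm.toLinearMap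
  have hT : LinearMap.ker T = ⊥ := by
    rw [LinearMap.ker_eq_bot]
    exact ((toL2_inj N hρ).comp Subtype.val_injective).comp b.equivFun.symm.injective
  obtain ⟨K, hK0, hK⟩ := T.exists_antilipschitzWith hT
  have hbd : ∀ (m : ℕ) (i : Fin (Module.finrank ℝ W)), ∃ M : ℝ,
      ∀ x ∈ closedBall (0 : EuclideanSpace ℝ (Fin N)) 1,
        ‖iteratedFDeriv ℝ m (evP N (b i)) x‖ ≤ M := by
    intro m i
    exact (isCompact_closedBall _ _).exists_bound_of_continuousOn
      ((evP_contDiff (b i : MvPolynomial (Fin N) ℝ)).continuous_iteratedFDeriv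
        (by exact_mod_cast le_top)).continuousOn
  choose M hM using hbd
  have hM0 : ∀ m i, 0 ≤ M m i := fun m i =>
    (norm_nonneg _).trans (hM m i 0 (by simp))
  set S := ∑ m ∈ Finset.range (s + 1), ∑ i, M m i with hS
  have hS0 : 0 ≤ S := Finset.sum_nonneg fun m _ => Finset.sum_nonneg fun i _ => hM0 m i
  refine ⟨(K * S) ^ 2 + 1, by positivity, ?_⟩
  rintro w ⟨P, hPd, hPw⟩ m hm x hx
  have hw : w = evP N P := funext hPw
  let Q : W := ⟨P, (MvPolynomial.mem_restrictTotalDegree _ _ _).2 hPd⟩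
  set c := b.equivFun Q with hc
  have hTc : T c = toL2 N ρ P := by
    simp only [T, hc, LinearMap.comp_apply, LinearEquiv.coe_coe, LinearEquiv.symm_apply_apply]
    rfl
  have hcn : ‖c‖ ≤ K * ‖toL2 N ρ P‖ := by
    have := hK.le_mul_dist c 0
    rwa [map_zero, dist_zero_right, dist_zero_right, hTc] at this
  have hPs : evP N P = fun x => ∑ i, c i • evP N (b i) x := by
    have h1 : Q = ∑ i, c i • b i := (b.sum_equivFun Q).symm
    have h2 : P = ∑ i, c i • (b i : MvPolynomial (Fin N) ℝ) := by
      have := congrArg (Subtype.val) h1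
      simpa using this
    conv_lhs => rw [h2]
    ext x
    rw [map_sum, Finset.sum_apply]
    simp
  have hDw : ‖iteratedFDeriv ℝ m w x‖ ≤ ‖c‖ * S := by
    have hcd : ∀ i, ContDiff ℝ m (fun x => c i • evP N (b i) x) := fun i =>
      ((evP_contDiff (b i : MvPolynomial (Fin N) ℝ)).of_le (by exact_mod_cast le_top)).const_smul _
    rw [hw, hPs, iteratedFDeriv_fun_sum_apply (fun i _ => (hcd i).contDiffAt)]
    calc _ ≤ ∑ i, ‖iteratedFDeriv ℝ m (fun x => c i • evP N (b i) x) x‖ := norm_sum_le _ _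
      _ ≤ ∑ i, ‖c‖ * M m i := by
          refine Finset.sum_le_sum fun i _ => ?_
          have : iteratedFDeriv ℝ m (fun x => c i • evP N (b i) x) x =
              c i • iteratedFDeriv ℝ m (evP N (b i)) x :=
            iteratedFDeriv_const_smul_apply (a := c i)
              ((evP_contDiff (b i : MvPolynomial (Fin N) ℝ)).of_le
                (by exact_mod_cast le_top)).contDiffAt
          rw [this, norm_smul]
          gcongr
          · exact norm_le_pi_norm c i
          · exact hM m i x hx
      _ = ‖c‖ * ∑ i, M m i := by rw [Finset.mul_sum]
      _ ≤ ‖c‖ * S := by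
          gcongr
          exact Finset.single_le_sum (f := fun m => ∑ i, M m i)
            (fun m _ => Finset.sum_nonneg fun i _ => hM0 m i) (Finset.mem_range.2 (by omega))
  rw [hw, ← toL2_norm, ← hw]
  calc ‖iteratedFDeriv ℝ m w x‖ ^ 2 ≤ ((K * ‖toL2 N ρ P‖) * S) ^ 2 := by
        gcongr
        exact hDw.trans (by gcongr)
    _ = (K * S) ^ 2 * ‖toL2 N ρ P‖ ^ 2 := by ring
    _ ≤ _ := by gcongr; linarith

end NormEq

section Scaling

lemma isPoly_affine {N k : ℕ} {w : EuclideanSpace ℝ (Fin N) → ℝ} (hw : IsPolyDegLE N k w)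
    (c : EuclideanSpace ℝ (Fin N)) (h : ℝ) : IsPolyDegLE N k (fun x => w (c + h • x)) := by
  obtain ⟨P, h1, h2⟩ := hw
  refine ⟨∑ d ∈ P.support, MvPolynomial.C (P.coeff d) *
    ∏ i, (MvPolynomial.C (c i) + MvPolynomial.C h * MvPolynomial.X i) ^ d i, ?_, fun x => ?_⟩
  · refine MvPolynomial.totalDegree_finsetSum_le fun d hd => ?_
    refine (MvPolynomial.totalDegree_mul _ _).trans ?_
    rw [MvPolynomial.totalDegree_C, zero_add]
    refine (MvPolynomial.totalDegree_finsetProd _ _).trans ?_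
    refine le_trans ?_ ((MvPolynomial.le_totalDegree hd).trans h1)
    rw [Finsupp.sum_fintype _ _ (by simp)]
    refine Finset.sum_le_sum fun i _ => ?_
    refine (MvPolynomial.totalDegree_pow _ _).trans ?_
    have : (MvPolynomial.C (c i) + MvPolynomial.C h * MvPolynomial.X i :
        MvPolynomial (Fin N) ℝ).totalDegree ≤ 1 := by
      refine (MvPolynomial.totalDegree_add _ _).trans (max_le (by simp) ?_)
      refine (MvPolynomial.totalDegree_mul _ _).trans ?_
      simp
    nlinarith
  · change w (c + h • x) = _
    rw [h2, MvPolynomial.eval_eq', map_sum]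
    simp [map_prod]

lemma norm_equiv_scaled (N k s : ℕ) {ρ : ℝ} (hρ : 0 < ρ) :
    ∃ K : ℝ, 0 < K ∧ ∀ w, IsPolyDegLE N k w → ∀ m ≤ s, ∀ (h : ℝ), 0 < h →
      ∀ c, ∀ x ∈ closedBall (c : EuclideanSpace ℝ (Fin N)) h,
        (h ^ m * ‖iteratedFDeriv ℝ m w x‖) ^ 2 ≤
          K * ((h ^ N)⁻¹ * ∫ y in ball c (ρ * h), (w y) ^ 2) := by
  obtain ⟨K, hK0, hK⟩ := norm_equiv_ref N k s hρ
  refine ⟨K, hK0, fun w hw m hm h hh c x hx => ?_⟩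
  have hcd := isPoly_contDiff hw
  have hξ : h⁻¹ • (x - c) ∈ closedBall (0 : EuclideanSpace ℝ (Fin N)) 1 := by
    rw [mem_closedBall, dist_zero_right, norm_smul, norm_inv, Real.norm_of_nonneg hh.le]
    rw [mem_closedBall, dist_eq_norm] at hx
    rw [inv_mul_le_iff₀ hh]; simpa using hx
  have h1 := hK _ (isPoly_affine hw c h) m hm _ hξ
  have hD : iteratedFDeriv ℝ m (fun x => w (c + h • x)) (h⁻¹ • (x - c)) =
      h ^ m • iteratedFDeriv ℝ m w x := by
    have hcd' : ContDiff ℝ m (fun z => w (c + z)) :=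
      (hcd.comp (contDiff_const.add contDiff_id)).of_le (by exact_mod_cast le_top)
    have := iteratedFDeriv_comp_const_smul (i := m) h hcd'
    rw [this]
    simp only [smul_inv_smul₀ hh.ne']
    rw [iteratedFDeriv_comp_add_left]
    simp
  rw [hD, norm_smul, norm_pow, Real.norm_of_nonneg hh.le] at h1
  have hI : ∫ y in ball (0 : EuclideanSpace ℝ (Fin N)) ρ, (w (c + h • y)) ^ 2 =
      (h ^ N)⁻¹ * ∫ y in ball c (ρ * h), (w y) ^ 2 := by
    rw [Measure.setIntegral_comp_smul_of_pos volume (fun z => (w (c + z)) ^ 2) _ hh,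
      _root_.smul_ball hh.ne', smul_zero, Real.norm_of_nonneg hh.le, finrank_euclideanSpace_fin,
      smul_eq_mul]
    congr 1
    have := (measurePreserving_add_left (volume : Measure (EuclideanSpace ℝ (Fin N)))
      c).setIntegral_preimage_emb (MeasurableEquiv.addLeft c).measurableEmbedding
        (fun z => (w z) ^ 2) (ball c (ρ * h))
    rw [← this]
    congr 2
    ext z
    simp [mul_comm]
  rwa [hI] at h1

/-- the `L^2`-projection bound -/
lemma proj_bound {N k s : ℕ} {ρ K : ℝ} (hK0 : 0 < K)
    (hK : ∀ w, IsPolyDegLE N k w → ∀ m ≤ s, ∀ (h : ℝ), 0 < h →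
      ∀ c, ∀ x ∈ closedBall (c : EuclideanSpace ℝ (Fin N)) h,
        (h ^ m * ‖iteratedFDeriv ℝ m w x‖) ^ 2 ≤
          K * ((h ^ N)⁻¹ * ∫ y in ball c (ρ * h), (w y) ^ 2))
    {U : Set (EuclideanSpace ℝ (Fin N))} {c : EuclideanSpace ℝ (Fin N)} {h : ℝ} (hh : 0 < h)
    (hUm : MeasurableSet U)
    (hBU : ball c (ρ * h) ⊆ U) (hUB : U ⊆ closedBall c h)
    {w e : EuclideanSpace ℝ (Fin N) → ℝ} (hw : IsPolyDegLE N k w) (he : IntegrableOn e U)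
    (hwe : ∫ x in U, w x * w x = ∫ x in U, e x * w x) (m : ℕ) (hm : m ≤ s) (x) (hx : x ∈ U) :
    h ^ m * ‖iteratedFDeriv ℝ m w x‖ ≤ K * (h ^ N)⁻¹ * ∫ x in U, ‖e x‖ := by
  have hcw := (isPoly_contDiff hw).continuous
  have hwi : IntegrableOn (fun x => w x ^ 2) U :=
    ((hcw.pow 2).continuousOn.integrableOn_compact (isCompact_closedBall c h)).mono_set hUB
  set I := ∫ x in U, w x ^ 2 with hI
  set A := K * (h ^ N)⁻¹ with hA
  have hA0 : 0 < A := by positivity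
  have hI0 : 0 ≤ I := integral_nonneg fun _ => sq_nonneg _
  set S := Real.sqrt (A * I) with hS
  have hS0 : 0 ≤ S := Real.sqrt_nonneg _
  have hSS : S ^ 2 = A * I := Real.sq_sqrt (by positivity)
  have hbd : ∀ m ≤ s, ∀ x ∈ U, h ^ m * ‖iteratedFDeriv ℝ m w x‖ ≤ S := by
    intro m hm x hx
    refine Real.le_sqrt_of_sq_le ((hK w hw m hm h hh c x (hUB hx)).trans ?_)
    rw [hA, mul_assoc]
    gcongr
    exact setIntegral_mono_set hwi (ae_of_all _ fun _ => sq_nonneg _) hBU.eventuallyLE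
  have hw0 : ∀ x ∈ U, ‖w x‖ ≤ S := by
    intro x hx
    simpa using hbd 0 (Nat.zero_le _) x hx
  have hIe : I ≤ S * ∫ x in U, ‖e x‖ := by
    have : I = ∫ x in U, e x * w x := by rw [← hwe]; simp only [hI, sq]
    rw [this, ← integral_const_mul]
    refine (Real.le_norm_self _).trans ((norm_integral_le_integral_norm _).trans ?_)
    refine integral_mono_of_nonneg (ae_of_all _ fun _ => norm_nonneg _) (he.norm.const_mul _) ?_
    filter_upwards [ae_restrict_mem hUm] with y hy
    rw [norm_mul, mul_comm]
    gcongr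
    exact hw0 y hy
  have hSle : S ≤ A * ∫ x in U, ‖e x‖ := by
    rcases hS0.eq_or_lt with h0 | h0
    · rw [← h0]; positivity
    · have : S * S ≤ S * (A * ∫ x in U, ‖e x‖) := by
        rw [← sq, hSS]
        calc A * I ≤ A * (S * ∫ x in U, ‖e x‖) := by gcongr
          _ = _ := by ring
      exact le_of_mul_le_mul_left this h0
  exact (hbd m hm x hx).trans hSle

/-- the `L^p` version of the bound -/
lemma proj_bound_Lp {N k s : ℕ} {ρ K : ℝ} (hK0 : 0 < K)
    (hK : ∀ w, IsPolyDegLE N k w → ∀ m ≤ s, ∀ (h : ℝ), 0 < h →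
      ∀ c, ∀ x ∈ closedBall (c : EuclideanSpace ℝ (Fin N)) h,
        (h ^ m * ‖iteratedFDeriv ℝ m w x‖) ^ 2 ≤
          K * ((h ^ N)⁻¹ * ∫ y in ball c (ρ * h), (w y) ^ 2))
    {U : Set (EuclideanSpace ℝ (Fin N))} {c : EuclideanSpace ℝ (Fin N)} {h : ℝ} (hh : 0 < h)
    (hUm : MeasurableSet U) (hU0 : volume U ≠ 0)
    (hBU : ball c (ρ * h) ⊆ U) (hUB : U ⊆ closedBall c h)
    {w e : EuclideanSpace ℝ (Fin N) → ℝ} (hw : IsPolyDegLE N k w) (he : IntegrableOn e U)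
    (hwe : ∫ x in U, w x * w x = ∫ x in U, e x * w x) (m : ℕ) (hm : m ≤ s)
    (p : ℝ≥0∞) (hp : 1 ≤ p) :
    eLpNorm (iteratedFDeriv ℝ m w) p (volume.restrict U) ≤
      ENNReal.ofReal (K * (volume (closedBall (0 : EuclideanSpace ℝ (Fin N)) 1)).toReal *
        (h ^ m)⁻¹) * eLpNorm e p (volume.restrict U) := by
  have hUle : volume U ≤ ENNReal.ofReal (h ^ N) *
      volume (closedBall (0 : EuclideanSpace ℝ (Fin N)) 1) := by
    refine (measure_mono hUB).trans ?_
    rw [Measure.addHaar_closedBall' _ _ hh.le, finrank_euclideanSpace_fin]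
  have hbt : volume (closedBall (0 : EuclideanSpace ℝ (Fin N)) 1) ≠ ⊤ :=
    measure_closedBall_lt_top.ne
  have hUt : volume U ≠ ⊤ := ((measure_mono hUB).trans_lt measure_closedBall_lt_top).ne
  have h1 : ∀ᵐ x ∂(volume.restrict U), ‖iteratedFDeriv ℝ m w x‖ ≤
      (h ^ m)⁻¹ * (K * (h ^ N)⁻¹ * ∫ x in U, ‖e x‖) := by
    filter_upwards [ae_restrict_mem hUm] with x hx
    rw [← div_eq_inv_mul, le_div_iff₀ (by positivity), mul_comm]
    exact proj_bound hK0 hK hh hUm hBU hUB hw he hwe m hm x hx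
  have h2 := eLpNorm_le_of_ae_bound (p := p) h1
  rw [Measure.restrict_apply_univ] at h2
  have h3 : ENNReal.ofReal (∫ x in U, ‖e x‖) = eLpNorm e 1 (volume.restrict U) := by
    rw [ofReal_integral_norm_eq_lintegral_enorm he, eLpNorm_one_eq_lintegral_enorm]
  have h4 := eLpNorm_le_eLpNorm_mul_rpow_measure_univ hp he.aestronglyMeasurable
  rw [Measure.restrict_apply_univ] at h4
  refine h2.trans ?_
  rw [ENNReal.ofReal_mul (by positivity), ENNReal.ofReal_mul (by positivity), h3]
  set L := eLpNorm e p (volume.restrict U)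
  calc volume U ^ p.toReal⁻¹ * (ENNReal.ofReal (h ^ m)⁻¹ * (ENNReal.ofReal (K * (h ^ N)⁻¹) *
          eLpNorm e 1 (volume.restrict U)))
      ≤ volume U ^ p.toReal⁻¹ * (ENNReal.ofReal (h ^ m)⁻¹ * (ENNReal.ofReal (K * (h ^ N)⁻¹) *
          (L * volume U ^ (1 / (1 : ℝ≥0∞).toReal - 1 / p.toReal)))) := by gcongr
    _ = (volume U ^ p.toReal⁻¹ * volume U ^ (1 / (1 : ℝ≥0∞).toReal - 1 / p.toReal)) *
          (ENNReal.ofReal (h ^ m)⁻¹ * ENNReal.ofReal (K * (h ^ N)⁻¹)) * L := by ring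
    _ = volume U * (ENNReal.ofReal (h ^ m)⁻¹ * ENNReal.ofReal (K * (h ^ N)⁻¹)) * L := by
        rw [← ENNReal.rpow_add _ _ hU0 hUt]
        simp
    _ ≤ (ENNReal.ofReal (h ^ N) * volume (closedBall (0 : EuclideanSpace ℝ (Fin N)) 1)) *
          (ENNReal.ofReal (h ^ m)⁻¹ * ENNReal.ofReal (K * (h ^ N)⁻¹)) * L := by gcongr
    _ = _ := by
        congr 1
        rw [← ENNReal.ofReal_toReal hbt, ← ENNReal.ofReal_mul (by positivity),
          ← ENNReal.ofReal_mul (by positivity), ← ENNReal.ofReal_mul (by positivity),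
          ENNReal.toReal_ofReal (by positivity)]
        congr 1
        field_simp

end Scaling

section MainAux

lemma norm_iter_eLp {N : ℕ} (j : ℕ) (p : ℝ≥0∞) (U : Set (EuclideanSpace ℝ (Fin N)))
    (u : EuclideanSpace ℝ (Fin N) → ℝ) :
    eLpNorm (fderiv ℝ (iteratedFDeriv ℝ j u)) p (volume.restrict U) =
      eLpNorm (iteratedFDeriv ℝ (j + 1) u) p (volume.restrict U) := by
  have hx : ∀ x, ‖fderiv ℝ (iteratedFDeriv ℝ j u) x‖ = ‖iteratedFDeriv ℝ (j + 1) u x‖ := by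
    intro x
    exact norm_fderiv_iteratedFDeriv
  rw [← eLpNorm_norm (fderiv ℝ (iteratedFDeriv ℝ j u)), ← eLpNorm_norm (iteratedFDeriv ℝ (j + 1) u)]
  simp_rw [hx]

/-- iterated Poincare estimate -/
lemma poincare_iter {N s : ℕ} {ρ : ℝ} (hρ : 0 < ρ) {U V : Set (EuclideanSpace ℝ (Fin N))}
    (hU : IsOpen U) (hV : IsOpen V) (hUV : closure U ⊆ V)
    {c : EuclideanSpace ℝ (Fin N)} {h : ℝ} (hh : 0 < h)
    (hBU : ball c (ρ * h) ⊆ U) (hUB : U ⊆ closedBall c h)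
    (hdist : ∀ x ∈ U, ∀ y ∈ U, ‖x - y‖ ≤ h)
    (hseg : ∀ x ∈ ball c (ρ * h), ∀ y ∈ U, segment ℝ x y ⊆ U)
    {u : EuclideanSpace ℝ (Fin N) → ℝ} (hu : ContDiffOn ℝ (⊤ : ℕ∞) u V)
    (hz : ∀ j < s, ∫ y in ball c (ρ * h), iteratedFDeriv ℝ j u y = 0)
    (p : ℝ≥0∞) (hp : 1 ≤ p) (i : ℕ) (hi : i ≤ s) :
    eLpNorm (iteratedFDeriv ℝ (s - i) u) p (volume.restrict U) ≤
      ENNReal.ofReal ((h * (2 ^ N * (1 + (ρ ^ N)⁻¹))) ^ i) *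
        eLpNorm (iteratedFDeriv ℝ s u) p (volume.restrict U) := by
  induction i with
  | zero => simp
  | succ i ih =>
    have ih := ih (by omega)
    obtain ⟨j, hj⟩ : ∃ j, s - i = j + 1 := ⟨s - i - 1, by omega⟩
    have hj2 : s - (i + 1) = j := by omega
    rw [hj] at ih
    rw [hj2]
    have hr : 0 < ρ * h := by positivity
    have hvol : volume U ≤ ENNReal.ofReal (ρ ^ N)⁻¹ * volume (ball c (ρ * h)) := by
      refine (measure_mono hUB).trans ?_
      rw [Measure.addHaar_closedBall _ _ hh.le, Measure.addHaar_ball_of_pos _ _ hr,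
        finrank_euclideanSpace_fin, ← mul_assoc, ← ENNReal.ofReal_mul (by positivity)]
      gcongr
      rw [mul_pow, inv_mul_cancel_left₀ (by positivity)]
    have hsm := smooth_iter hV hu j
    have hgc : ContinuousOn (iteratedFDeriv ℝ j u) (closedBall c (ρ * h)) := by
      refine hsm.continuousOn.mono ?_
      rw [← closure_ball c hr.ne']
      exact (closure_mono hBU).trans hUV
    have hgi : IntegrableOn (iteratedFDeriv ℝ j u) (ball c (ρ * h)) volume :=
      IntegrableOn.mono_set (ContinuousOn.integrableOn_compact (isCompact_closedBall c (ρ * h)) hgc)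
        ball_subset_closedBall
    have hP := aux_poincare U (ball c (ρ * h)) hU measurableSet_ball
      (measure_ball_pos _ _ hr).ne' measure_ball_lt_top.ne _ hvol (iteratedFDeriv ℝ j u)
      ((hsm.mono (subset_closure.trans hUV)).of_le (by exact_mod_cast le_top)) (h := h)
      hgi (hz j (by omega))
      (fun x hx y hy => hdist x hx y (hBU hy)) (fun x hx y hy => hseg y hy x hx) p hp
    have hfd : eLpNorm (fderiv ℝ (iteratedFDeriv ℝ j u)) p (volume.restrict U) =
        eLpNorm (iteratedFDeriv ℝ (j + 1) u) p (volume.restrict U) :=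
      norm_iter_eLp j p U u
    rw [hfd] at hP
    have hc : ENNReal.ofReal h * (ENNReal.ofReal (2 ^ N) * (1 + ENNReal.ofReal (ρ ^ N)⁻¹)) =
        ENNReal.ofReal (h * (2 ^ N * (1 + (ρ ^ N)⁻¹))) := by
      rw [← ENNReal.ofReal_one, ← ENNReal.ofReal_add zero_le_one (by positivity),
        ← ENNReal.ofReal_mul (by positivity), ← ENNReal.ofReal_mul (by positivity)]
    rw [hc] at hP
    refine hP.trans ?_
    have hsplit : ENNReal.ofReal ((h * (2 ^ N * (1 + (ρ ^ N)⁻¹))) ^ (i + 1)) =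
        ENNReal.ofReal (h * (2 ^ N * (1 + (ρ ^ N)⁻¹))) *
          ENNReal.ofReal ((h * (2 ^ N * (1 + (ρ ^ N)⁻¹))) ^ i) := by
      rw [← ENNReal.ofReal_mul (by positivity), pow_succ']
    rw [hsplit, mul_assoc]
    exact mul_le_mul_right ih _


end MainAux
theorem wsp_approximation_of_l2_projection
    (N k : ℕ) (hN : 1 ≤ N) (s : ℕ) (hs : 1 ≤ s) (hsk : s ≤ k + 1)
    (p : ℝ≥0∞) (hp : 1 ≤ p) (ρ : ℝ) (hρ : 0 < ρ) :
    ∃ C : ℝ, 0 < C ∧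
      ∀ U : Set (EuclideanSpace ℝ (Fin N)),
        IsOpen U → Bornology.IsBounded U → StarShapedWrtBall ρ U →
        ∀ v : EuclideanSpace ℝ (Fin N) → ℝ,
          (∃ V, IsOpen V ∧ closure U ⊆ V ∧ ContDiffOn ℝ (⊤ : ℕ∞) v V) →
        ∀ P : EuclideanSpace ℝ (Fin N) → ℝ, IsPolyDegLE N k P →
          (∀ q : EuclideanSpace ℝ (Fin N) → ℝ, IsPolyDegLE N k q →
            ∫ x in U, P x * q x = ∫ x in U, v x * q x) →
        ∀ m : ℕ, m ≤ s →
          sobSemi m p U (fun x => v x - P x)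
            ≤ ENNReal.ofReal (C * Metric.diam U ^ (s - m)) * sobSemi s p U v := by
  classical
  obtain ⟨K, hK0, hK⟩ := norm_equiv_scaled N k s hρ
  set ω := (volume (closedBall (0 : EuclideanSpace ℝ (Fin N)) 1)).toReal with hω
  set Cp : ℝ := 2 ^ N * (1 + (ρ ^ N)⁻¹) with hCp
  have hCp1 : 1 ≤ Cp := by
    have h1 : (1 : ℝ) ≤ 2 ^ N := one_le_pow₀ (by norm_num)
    have h2 : 0 ≤ (ρ ^ N)⁻¹ := by positivity
    rw [hCp]; nlinarith
  have hω0 : 0 ≤ ω := ENNReal.toReal_nonneg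
  refine ⟨Cp ^ s * (1 + K * ω), by positivity, ?_⟩
  rintro U hU hUb ⟨c, hBU, hseg⟩ v ⟨V, hV, hUV, hv⟩ P hP hproj m hm
  by_cases hU0 : volume U = 0
  · have : volume.restrict U = 0 := Measure.restrict_eq_zero.2 hU0
    simp [sobSemi, this]
  have : Nonempty (Fin N) := ⟨⟨0, by omega⟩⟩
  have hnt : U.Nontrivial := by
    rw [← Set.not_subsingleton_iff]
    intro hs
    exact hU0 (hs.measure_zero _)
  have hh : 0 < diam U := Metric.diam_pos hnt hUb
  set h := diam U with hhd
  have hr : 0 < ρ * h := by positivity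
  have hcU : c ∈ U := hBU (mem_ball_self hr)
  have hdist : ∀ x ∈ U, ∀ y ∈ U, ‖x - y‖ ≤ h := fun x hx y hy => by
    rw [← dist_eq_norm]; exact dist_le_diam_of_mem hUb hx hy
  have hUB : U ⊆ closedBall c h := fun x hx => by
    rw [mem_closedBall, dist_eq_norm]; exact hdist x hx c hcU
  obtain ⟨q, hq, hqs, hqz⟩ := aux_exists_poly V (ball c (ρ * h)) hV
    ((closure_mono hBU).trans hUV) isBounded_ball measurableSet_ball
    (measure_ball_pos _ _ hr).ne' s v hv
  have hqk : IsPolyDegLE N k q := isPoly_mono (by omega) hq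
  have hqc := isPoly_contDiff hqk
  have hPc := isPoly_contDiff hP
  set u : EuclideanSpace ℝ (Fin N) → ℝ := fun x => v x - q x with hu
  have hus : ContDiffOn ℝ (⊤ : ℕ∞) u V := hv.sub hqc.contDiffOn
  set w : EuclideanSpace ℝ (Fin N) → ℝ := fun x => P x - q x with hw
  have hwk : IsPolyDegLE N k w := isPoly_sub hP hqk
  have hwc := isPoly_contDiff hwk
  have hUVs : U ⊆ V := subset_closure.trans hUV
  have hUcomp : IsCompact (closure U) := hUb.isCompact_closure
  have hint : ∀ f : EuclideanSpace ℝ (Fin N) → ℝ, ContinuousOn f V → IntegrableOn f U := fun f hf =>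
    ((hf.mono hUV).integrableOn_compact hUcomp).mono_set subset_closure
  have hwe : ∫ x in U, w x * w x = ∫ x in U, u x * w x := by
    have h1 := hproj w hwk
    have e1 : ∫ x in U, w x * w x = (∫ x in U, P x * w x) - ∫ x in U, q x * w x := by
      rw [← integral_sub (hint (fun x => P x * w x) (hPc.continuous.mul hwc.continuous).continuousOn)
        (hint (fun x => q x * w x) (hqc.continuous.mul hwc.continuous).continuousOn)]
      exact integral_congr_ae (ae_of_all _ fun x => by simp only [hw]; ring)
    have e2 : ∫ x in U, u x * w x = (∫ x in U, v x * w x) - ∫ x in U, q x * w x := by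
      rw [← integral_sub (hint (fun x => v x * w x) (hv.continuousOn.mul hwc.continuous.continuousOn))
        (hint (fun x => q x * w x) (hqc.continuous.mul hwc.continuous).continuousOn)]
      exact integral_congr_ae (ae_of_all _ fun x => by simp only [hu]; ring)
    rw [e1, e2, h1]
  have hpi := poincare_iter hρ hU hV hUV hh hBU hUB hdist hseg hus hqz p hp
  have hDs : eLpNorm (iteratedFDeriv ℝ s u) p (volume.restrict U) = sobSemi s p U v := by
    rw [sobSemi, eLpNorm_norm]
    refine eLpNorm_congr_ae ?_
    filter_upwards [ae_restrict_mem hU.measurableSet] with x hx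
    rw [hu, fun_iteratedFDeriv_sub_apply
      ((hv.contDiffAt (hV.mem_nhds (hUVs hx))).of_le (by exact_mod_cast le_top))
      ((hqc.contDiffAt).of_le (by exact_mod_cast le_top)), hqs, sub_zero]
  rw [hDs] at hpi
  have hum := hpi (s - m) (by omega)
  have hu0 := hpi s le_rfl
  rw [Nat.sub_sub_self hm] at hum
  have hu0' : eLpNorm u p (volume.restrict U) ≤
      ENNReal.ofReal ((h * Cp) ^ s) * sobSemi s p U v := by
    refine le_trans (le_of_eq ?_) hu0
    refine eLpNorm_congr_norm_ae (ae_of_all _ fun x => ?_)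
    rw [Nat.sub_self]; simp
  have hwm := proj_bound_Lp hK0 hK hh hU.measurableSet hU0 hBU hUB hwk
    (hint u hus.continuousOn) hwe m hm p hp
  have hsplit : sobSemi m p U (fun x => v x - P x) =
      eLpNorm (iteratedFDeriv ℝ m u - iteratedFDeriv ℝ m w) p (volume.restrict U) := by
    rw [sobSemi, eLpNorm_norm]
    refine eLpNorm_congr_ae ?_
    filter_upwards [ae_restrict_mem hU.measurableSet] with x hx
    rw [Pi.sub_apply, ← fun_iteratedFDeriv_sub_apply
      ((hus.contDiffAt (hV.mem_nhds (hUVs hx))).of_le (by exact_mod_cast le_top))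
      ((hwc.contDiffAt).of_le (by exact_mod_cast le_top))]
    congr 1
    ext y
    simp only [hu, hw]; ring
  have hmeas1 : AEStronglyMeasurable (iteratedFDeriv ℝ m u) (volume.restrict U) :=
    ((smooth_iter hV hus m).continuousOn.mono hUVs).aestronglyMeasurable hU.measurableSet
  have hmeas2 : AEStronglyMeasurable (iteratedFDeriv ℝ m w) (volume.restrict U) :=
    (hwc.continuous_iteratedFDeriv (by exact_mod_cast le_top)).aestronglyMeasurable
  rw [hsplit]
  set Z := sobSemi s p U v
  calc _ ≤ _ := eLpNorm_sub_le hmeas1 hmeas2 hp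
    _ ≤ ENNReal.ofReal ((h * Cp) ^ (s - m)) * Z + ENNReal.ofReal (K * ω * (h ^ m)⁻¹) *
          (ENNReal.ofReal ((h * Cp) ^ s) * Z) := by
        gcongr
        exact hwm.trans (by gcongr)
    _ = ENNReal.ofReal ((h * Cp) ^ (s - m) + K * ω * (h ^ m)⁻¹ * (h * Cp) ^ s) * Z := by
        rw [ENNReal.ofReal_add (by positivity) (by positivity),
          ENNReal.ofReal_mul (p := K * ω * (h ^ m)⁻¹) (by positivity)]
        ring
    _ ≤ _ := by
        gcongr
        have hpow : h ^ s = h ^ m * h ^ (s - m) := by rw [← pow_add]; congr 1; omega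
        have e1 : K * ω * (h ^ m)⁻¹ * (h * Cp) ^ s = Cp ^ s * (K * ω) * h ^ (s - m) := by
          rw [mul_pow, hpow]; field_simp
        have e2 : Cp ^ (s - m) ≤ Cp ^ s := pow_le_pow_right₀ hCp1 (Nat.sub_le _ _)
        rw [e1, mul_pow]
        have : h ^ (s - m) * Cp ^ (s - m) ≤ h ^ (s - m) * Cp ^ s := by gcongr
        linarith
end
end

section
/- For every dimension N ≥ 1, every degree k ∈ ℕ, every δ > 0, all exponents p, q ∈ [1, +∞], and all integers m ≥ r ≥ 0, there exists a constant M > 0 depending only on N, k, δ, p, q, m and r such that: for every open bounded set U ⊆ ℝ^N of positive Lebesgue measure |U| and diameter h_U > 0 satisfying the δ-ball condition, and every polynomial w : ℝ^N → ℝ of total degree at most k, the reverse Sobolev embedding |w|_{W^{m,p}(U)} ≤ M · h_U^{r−m} · |U|^{1/p − 1/q} · |w|_{W^{r,q}(U)} holds. -/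
open MeasureTheory Metric
open scoped ENNReal

noncomputable section

/-- Polynomial function attached to a multivariate polynomial. -/
def pf {N : ℕ} (P : MvPolynomial (Fin N) ℝ) : EuclideanSpace ℝ (Fin N) → ℝ :=
  fun x => MvPolynomial.eval (fun i => x i) P

lemma pf_analytic {N : ℕ} (P : MvPolynomial (Fin N) ℝ) : AnalyticOnNhd ℝ (pf P) Set.univ := by
  intro x _
  induction P using MvPolynomial.induction_on with
  | C a =>
    have : pf (N := N) (MvPolynomial.C a) = fun _ => a := by ext y; simp [pf]
    rw [this]
    exact analyticAt_const
  | add P Q hP hQ =>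
    have : pf (P + Q) = fun y => pf P y + pf Q y := by ext y; simp [pf]
    rw [this]
    exact hP.add hQ
  | mul_X P i hP =>
    have : pf (P * MvPolynomial.X i) = fun y => pf P y * y i := by ext y; simp [pf]
    rw [this]
    have hi : AnalyticAt ℝ (fun y : EuclideanSpace ℝ (Fin N) => y i) x :=
      (EuclideanSpace.proj i : EuclideanSpace ℝ (Fin N) →L[ℝ] ℝ).analyticAt x
    exact hP.mul hi

lemma pf_contDiff {N : ℕ} (P : MvPolynomial (Fin N) ℝ) (n : WithTop ℕ∞) : ContDiff ℝ n (pf P) :=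
  (pf_analytic P).contDiff

lemma pf_add {N : ℕ} (P Q : MvPolynomial (Fin N) ℝ) : pf (P + Q) = pf P + pf Q := by
  ext x; simp [pf]

lemma pf_smul {N : ℕ} (c : ℝ) (P : MvPolynomial (Fin N) ℝ) : pf (c • P) = c • pf P := by
  ext x; simp [pf]

lemma cont_D {N : ℕ} (P : MvPolynomial (Fin N) ℝ) (m : ℕ) :
    Continuous (iteratedFDeriv ℝ m (pf P)) :=
  (pf_contDiff P m).continuous_iteratedFDeriv'

lemma D_add {N : ℕ} (P Q : MvPolynomial (Fin N) ℝ) (m : ℕ) :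
    iteratedFDeriv ℝ m (pf (P + Q)) = iteratedFDeriv ℝ m (pf P) + iteratedFDeriv ℝ m (pf Q) := by
  ext1 x
  rw [pf_add]
  exact iteratedFDeriv_add_apply (pf_contDiff P m).contDiffAt (pf_contDiff Q m).contDiffAt

lemma D_smul {N : ℕ} (c : ℝ) (P : MvPolynomial (Fin N) ℝ) (m : ℕ) :
    iteratedFDeriv ℝ m (pf (c • P)) = c • iteratedFDeriv ℝ m (pf P) := by
  ext1 x
  rw [pf_smul]
  exact iteratedFDeriv_const_smul_apply (pf_contDiff P m).contDiffAt

lemma D_zero_of_le {N : ℕ} (f : EuclideanSpace ℝ (Fin N) → ℝ) (r m : ℕ) (hrm : r ≤ m)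
    (h : iteratedFDeriv ℝ r f = 0) : iteratedFDeriv ℝ m f = 0 := by
  induction m, hrm using Nat.le_induction with
  | base => exact h
  | succ n hn ih =>
    rw [iteratedFDeriv_succ_eq_comp_left, ih]
    ext x
    simp

lemma intOn_D {N : ℕ} (P : MvPolynomial (Fin N) ℝ) (r : ℕ) (x : EuclideanSpace ℝ (Fin N)) (δ : ℝ) :
    Integrable (iteratedFDeriv ℝ r (pf P)) (volume.restrict (closedBall x δ)) :=
  (cont_D P r).continuousOn.integrableOn_compact (isCompact_closedBall _ _)

/-- abstract factorization -/
lemma bound_of_ker {V F G : Type*} [AddCommGroup V] [Module ℝ V] [Module.Finite ℝ V]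
    [NormedAddCommGroup F] [NormedSpace ℝ F] [NormedAddCommGroup G] [NormedSpace ℝ G]
    (A : V →ₗ[ℝ] F) (L : V →ₗ[ℝ] G) (h : ∀ v, A v = 0 → L v = 0) :
    ∃ C : ℝ, 0 < C ∧ ∀ v, ‖L v‖ ≤ C * ‖A v‖ := by
  let g0 : (V ⧸ LinearMap.ker A) →ₗ[ℝ] G := (LinearMap.ker A).liftQ L (fun v hv => h v hv)
  let g : LinearMap.range A →ₗ[ℝ] G := g0 ∘ₗ A.quotKerEquivRange.symm.toLinearMap
  have hg : ∀ v, g ⟨A v, LinearMap.mem_range_self A v⟩ = L v := by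
    intro v
    have : A.quotKerEquivRange.symm ⟨A v, LinearMap.mem_range_self A v⟩
        = (LinearMap.ker A).mkQ v := by
      rw [LinearEquiv.symm_apply_eq]
      rfl
    simp only [g, LinearMap.comp_apply, LinearEquiv.coe_coe]
    rw [this]
    exact Submodule.liftQ_apply _ _ _
  let gc : LinearMap.range A →L[ℝ] G := LinearMap.toContinuousLinearMap g
  refine ⟨‖gc‖ + 1, by positivity, fun v => ?_⟩
  have := gc.le_opNorm ⟨A v, LinearMap.mem_range_self A v⟩
  have h2 : gc ⟨A v, LinearMap.mem_range_self A v⟩ = L v := hg v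
  rw [h2] at this
  refine this.trans ?_
  have : ‖(⟨A v, LinearMap.mem_range_self A v⟩ : LinearMap.range A)‖ = ‖A v‖ := rfl
  rw [this]
  nlinarith [norm_nonneg (A v)]

lemma reference {N : ℕ} (k : ℕ) (δ : ℝ) (hδ : 0 < δ) (m r : ℕ) (hrm : r ≤ m) :
    ∃ C : ℝ, 0 < C ∧ ∀ P : MvPolynomial (Fin N) ℝ, P.totalDegree ≤ k →
      ∀ x ∈ closedBall (0 : EuclideanSpace ℝ (Fin N)) 1,
        ‖iteratedFDeriv ℝ m (pf P) x‖ ≤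
          C * ∫ y in closedBall (0 : EuclideanSpace ℝ (Fin N)) δ, ‖iteratedFDeriv ℝ r (pf P) y‖ := by
  let V := MvPolynomial.restrictTotalDegree (Fin N) ℝ k
  let K := closedBall (0 : EuclideanSpace ℝ (Fin N)) 1
  haveI : CompactSpace K := isCompact_iff_compactSpace.mp (isCompact_closedBall _ _)
  let L : V →ₗ[ℝ] C(K, ContinuousMultilinearMap ℝ (fun _ : Fin m => EuclideanSpace ℝ (Fin N)) ℝ) :=
    { toFun := fun P => ⟨fun x => iteratedFDeriv ℝ m (pf P.1) x.1,
        (cont_D P.1 m).comp continuous_subtype_val⟩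
      map_add' := fun P Q => by
        ext1 x
        exact congrFun (D_add P.1 Q.1 m) x.1
      map_smul' := fun c P => by
        ext1 x
        exact congrFun (D_smul c P.1 m) x.1 }
  let A : V →ₗ[ℝ] Lp (ContinuousMultilinearMap ℝ (fun _ : Fin r => EuclideanSpace ℝ (Fin N)) ℝ) 1
      (volume.restrict (closedBall (0 : EuclideanSpace ℝ (Fin N)) δ)) :=
    { toFun := fun P => (intOn_D P.1 r 0 δ).toL1 _
      map_add' := fun P Q => by
        rw [← Integrable.toL1_add]
        congr 1
        exact D_add P.1 Q.1 r
      map_smul' := fun c P => by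
        simp only [RingHom.id_apply]
        rw [← Integrable.toL1_smul']
        congr 1
        exact D_smul c P.1 r }
  obtain ⟨C, hC, hb⟩ := bound_of_ker
    (G := C(K, ContinuousMultilinearMap ℝ (fun _ : Fin m => EuclideanSpace ℝ (Fin N)) ℝ)) A L (by
    intro P hP
    have h1 : iteratedFDeriv ℝ r (pf P.1) =ᵐ[volume.restrict (closedBall 0 δ)] 0 := by
      exact (intOn_D P.1 r 0 δ).coeFn_toL1.symm.trans ((Lp.eq_zero_iff_ae_eq_zero).1 hP)
    have h2 : Set.EqOn (iteratedFDeriv ℝ r (pf P.1)) 0 (ball 0 δ) :=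
      Measure.eqOn_open_of_ae_eq (ae_restrict_of_ae_restrict_of_subset ball_subset_closedBall h1)
        isOpen_ball (cont_D P.1 r).continuousOn continuousOn_const
    have h3 : iteratedFDeriv ℝ r (pf P.1) = 0 :=
      ((pf_analytic P.1).iteratedFDeriv r).eq_of_eventuallyEq (z₀ := 0)
        (fun x _ => analyticAt_const)
        (Filter.eventuallyEq_of_mem (ball_mem_nhds 0 hδ) h2)
    have h4 := D_zero_of_le _ r m hrm h3
    ext1 x
    exact congrFun h4 x.1)
  refine ⟨C, hC, fun P hP x hx => ?_⟩
  have hPV : P ∈ V := (MvPolynomial.mem_restrictTotalDegree _ _ _).2 hP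
  have h1 := ContinuousMap.norm_coe_le_norm (L ⟨P, hPV⟩) ⟨x, hx⟩
  refine (h1.trans (hb _)).trans_eq ?_
  congr 1
  rw [L1.norm_eq_integral_norm]
  apply integral_congr_ae
  filter_upwards [(intOn_D P r 0 δ).coeFn_toL1] with y hy
  exact congrArg norm hy

lemma totalDegree_affine {N : ℕ} (a : Fin N → ℝ) (h : ℝ) (P : MvPolynomial (Fin N) ℝ) :
    (MvPolynomial.bind₁ (fun i => MvPolynomial.C (a i) + MvPolynomial.C h * MvPolynomial.X i)
      P : MvPolynomial (Fin N) ℝ).totalDegree ≤ P.totalDegree := by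
  have hlin : ∀ i, (MvPolynomial.C (a i) + MvPolynomial.C h * MvPolynomial.X i :
      MvPolynomial (Fin N) ℝ).totalDegree ≤ 1 := by
    intro i
    refine (MvPolynomial.totalDegree_add _ _).trans (max_le (by simp) ?_)
    refine (MvPolynomial.totalDegree_mul _ _).trans ?_
    simp
  conv_lhs => rw [P.as_sum]
  rw [map_sum]
  refine MvPolynomial.totalDegree_finsetSum_le (fun s hs => ?_)
  rw [MvPolynomial.bind₁_monomial]
  refine (MvPolynomial.totalDegree_mul _ _).trans ?_
  rw [MvPolynomial.totalDegree_C, zero_add]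
  refine (MvPolynomial.totalDegree_finsetProd _ _).trans ?_
  refine le_trans ?_ (MvPolynomial.le_totalDegree hs)
  refine Finset.sum_le_sum (fun i _ => ?_)
  refine (MvPolynomial.totalDegree_pow _ _).trans ?_
  exact (Nat.mul_le_mul_left _ (hlin i)).trans (by simp)

lemma scaled {N : ℕ} (k : ℕ) (δ : ℝ) (hδ : 0 < δ) (m r : ℕ) (hrm : r ≤ m) :
    ∃ C : ℝ, 0 < C ∧ ∀ P : MvPolynomial (Fin N) ℝ, P.totalDegree ≤ k →
      ∀ (x₀ : EuclideanSpace ℝ (Fin N)) (h : ℝ), 0 < h →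
      ∀ x ∈ closedBall x₀ h,
        ‖iteratedFDeriv ℝ m (pf P) x‖ ≤
          C * h ^ ((r : ℝ) - (m : ℝ)) * ((h ^ N)⁻¹ *
            ∫ y in closedBall x₀ (δ * h), ‖iteratedFDeriv ℝ r (pf P) y‖) := by
  obtain ⟨C, hC, H⟩ := reference (N := N) k δ hδ m r hrm
  refine ⟨C, hC, fun P hP x₀ h hh x hx => ?_⟩
  let Q : MvPolynomial (Fin N) ℝ := MvPolynomial.bind₁
    (fun i => MvPolynomial.C (x₀ i) + MvPolynomial.C h * MvPolynomial.X i) P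
  have hQ : pf Q = fun y => (fun z => pf P (x₀ + z)) (h • y) := by
    ext y
    simp only [pf, Q, MvPolynomial.eval, MvPolynomial.eval₂Hom_bind₁]
    congr 2
    ext i
    simp
  have hD : ∀ (n : ℕ) y, iteratedFDeriv ℝ n (pf Q) y
      = h ^ n • iteratedFDeriv ℝ n (pf P) (x₀ + h • y) := by
    intro n y
    have hc : ContDiff ℝ n (fun z => pf P (x₀ + z)) :=
      (pf_contDiff P n).comp (contDiff_const.add contDiff_id)
    rw [hQ, iteratedFDeriv_comp_const_smul h hc]
    simp only [iteratedFDeriv_comp_add_left]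
  have h1 := H Q ((totalDegree_affine _ _ P).trans hP) (h⁻¹ • (x - x₀)) (by
    rw [mem_closedBall_zero_iff, norm_smul, norm_inv, Real.norm_of_nonneg hh.le,
      inv_mul_le_iff₀ hh, mul_one, ← dist_eq_norm]
    exact hx)
  simp only [hD, norm_smul, norm_pow, Real.norm_of_nonneg hh.le] at h1
  rw [smul_inv_smul₀ hh.ne', add_sub_cancel, integral_const_mul] at h1
  have h2 : ∫ y in closedBall (0 : EuclideanSpace ℝ (Fin N)) δ,
      ‖iteratedFDeriv ℝ r (pf P) (x₀ + h • y)‖ = (h ^ N)⁻¹ *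
            ∫ y in closedBall x₀ (δ * h), ‖iteratedFDeriv ℝ r (pf P) y‖ := by
    have := Measure.setIntegral_comp_smul_of_pos (volume : Measure (EuclideanSpace ℝ (Fin N)))
      (fun z => ‖iteratedFDeriv ℝ r (pf P) (x₀ + z)‖) (closedBall 0 δ) hh
    rw [this, finrank_euclideanSpace_fin, smul_eq_mul, smul_closedBall' hh.ne', smul_zero,
      Real.norm_of_nonneg hh.le, mul_comm h δ]
    congr 1
    have hmp := measurePreserving_add_left (volume : Measure (EuclideanSpace ℝ (Fin N))) x₀
    have := hmp.setIntegral_preimage_emb (measurableEmbedding_addLeft x₀)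
      (fun z => ‖iteratedFDeriv ℝ r (pf P) z‖) (closedBall x₀ (δ * h))
    rw [← this]
    congr 2
    simp
  rw [h2] at h1
  have hrp : h ^ ((r : ℝ) - (m : ℝ)) = h ^ r / h ^ m := by
    rw [Real.rpow_sub hh, Real.rpow_natCast, Real.rpow_natCast]
  rw [hrp]
  have hm : 0 < h ^ m := by positivity
  rw [← mul_le_mul_iff_right₀ hm]
  refine h1.trans_eq ?_
  field_simp

/-- Reverse Sobolev embeddings on local polynomial spaces:
`|w|_{W^{m,p}(U)} ≤ M h_U^{r-m} |U|^{1/p-1/q} |w|_{W^{r,q}(U)}` for `m ≥ r`. -/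
theorem reverse_sobolev_embeddings
    (N k : ℕ) (hN : 1 ≤ N) (δ : ℝ) (hδ : 0 < δ) (p q : ℝ≥0∞) (hp : 1 ≤ p) (hq : 1 ≤ q)
    (m r : ℕ) (hrm : r ≤ m) :
    ∃ M : ℝ, 0 < M ∧
      ∀ U : Set (EuclideanSpace ℝ (Fin N)),
        IsOpen U → Bornology.IsBounded U → 0 < volume U → 0 < Metric.diam U →
        (∃ x, Metric.closedBall x (δ * Metric.diam U) ⊆ U) →
        ∀ w : EuclideanSpace ℝ (Fin N) → ℝ, IsPolyDegLE N k w →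
          sobSemi m p U w
            ≤ ENNReal.ofReal (M * Metric.diam U ^ ((r : ℝ) - (m : ℝ))) *
              volume U ^ ((p⁻¹).toReal - (q⁻¹).toReal) * sobSemi r q U w := by
  obtain ⟨C, hC, H⟩ := scaled (N := N) k δ hδ m r hrm
  haveI : Nonempty (Fin N) := ⟨⟨0, hN⟩⟩
  set c : ℝ≥0∞ := volume (ball (0 : EuclideanSpace ℝ (Fin N)) 1) with hc
  have hc0 : 0 < c := measure_ball_pos _ _ one_pos
  have hct : c ≠ ∞ := measure_ball_lt_top.ne
  refine ⟨C * c.toReal, mul_pos hC (ENNReal.toReal_pos hc0.ne' hct), ?_⟩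
  rintro U hUo hUb hU0 hh ⟨x₀, hx₀⟩ w ⟨P, hP, hwP⟩
  obtain rfl : w = pf P := funext hwP
  set h := Metric.diam U with hhdef
  have hx₀U : x₀ ∈ U := hx₀ (mem_closedBall_self (by positivity))
  have hUsub : U ⊆ closedBall x₀ h := fun y hy => Metric.dist_le_diam_of_mem hUb hy hx₀U
  have hUt : volume U ≠ ∞ := hUb.measure_lt_top.ne
  set I := ∫ y in closedBall x₀ (δ * h), ‖iteratedFDeriv ℝ r (pf P) y‖ with hI
  have hI0 : 0 ≤ I := integral_nonneg (fun _ => norm_nonneg _)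
  have hLHS : sobSemi m p U (pf P) ≤ volume U ^ (p⁻¹).toReal *
      ENNReal.ofReal (C * h ^ ((r : ℝ) - (m : ℝ)) * ((h ^ N)⁻¹ * I)) := by
    unfold sobSemi
    refine (eLpNorm_le_of_ae_bound
      (C := C * h ^ ((r : ℝ) - (m : ℝ)) * ((h ^ N)⁻¹ * I)) ?_).trans ?_
    · filter_upwards [ae_restrict_mem hUo.measurableSet] with x hx
      rw [norm_norm]
      exact H P hP x₀ h hh x (hUsub hx)
    · simp [ENNReal.toReal_inv]
  have hIle : ENNReal.ofReal I ≤ sobSemi r q U (pf P) * volume U ^ (1 - (q⁻¹).toReal) := by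
    have e1 : ENNReal.ofReal I = eLpNorm (fun x => ‖iteratedFDeriv ℝ r (pf P) x‖) 1
        (volume.restrict (closedBall x₀ (δ * h))) := by
      rw [eLpNorm_norm, eLpNorm_one_eq_lintegral_enorm, hI,
        ofReal_integral_norm_eq_lintegral_enorm (intOn_D P r x₀ (δ * h))]
    rw [e1]
    refine (eLpNorm_mono_measure _ (Measure.restrict_mono hx₀ le_rfl)).trans ?_
    have := eLpNorm_le_eLpNorm_mul_rpow_measure_univ (μ := volume.restrict U) hq
      (f := fun x => ‖iteratedFDeriv ℝ r (pf P) x‖) (cont_D P r).norm.aestronglyMeasurable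
    simpa [sobSemi, ENNReal.toReal_inv] using this
  have hvol : ENNReal.ofReal ((h ^ N)⁻¹) ≤ c * (volume U) ^ (-1 : ℝ) := by
    have h1 : volume U ≤ ENNReal.ofReal (h ^ N) * c := by
      refine (measure_mono hUsub).trans_eq ?_
      rw [Measure.addHaar_closedBall _ _ hh.le, finrank_euclideanSpace_fin]
    rw [ENNReal.rpow_neg_one, ENNReal.ofReal_inv_of_pos (by positivity), ← div_eq_mul_inv,
      ENNReal.le_div_iff_mul_le (Or.inl hU0.ne') (Or.inl hUt)]
    have hpos : ENNReal.ofReal (h ^ N) ≠ 0 := by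
      rw [Ne, ENNReal.ofReal_eq_zero, not_le]; positivity
    calc _ ≤ (ENNReal.ofReal (h ^ N))⁻¹ * (ENNReal.ofReal (h ^ N) * c) := by gcongr
      _ = c := by rw [← mul_assoc, ENNReal.inv_mul_cancel hpos ENNReal.ofReal_ne_top, one_mul]
  have hrp : 0 ≤ h ^ ((r : ℝ) - (m : ℝ)) := Real.rpow_nonneg hh.le _
  refine hLHS.trans ?_
  rw [ENNReal.ofReal_mul (by positivity), ENNReal.ofReal_mul (by positivity : 0 ≤ (h ^ N)⁻¹)]
  have e2 : ENNReal.ofReal (C * c.toReal * h ^ ((r : ℝ) - (m : ℝ)))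
      = ENNReal.ofReal (C * h ^ ((r : ℝ) - (m : ℝ))) * c := by
    rw [mul_right_comm, ENNReal.ofReal_mul (by positivity), ENNReal.ofReal_toReal hct]
  have e3 : volume U ^ ((p⁻¹).toReal - (q⁻¹).toReal)
      = volume U ^ (p⁻¹).toReal * volume U ^ (-1 : ℝ) * volume U ^ (1 - (q⁻¹).toReal) := by
    rw [← ENNReal.rpow_add _ _ hU0.ne' hUt, ← ENNReal.rpow_add _ _ hU0.ne' hUt]
    congr 1; ring
  rw [e2, e3]
  calc _ ≤ volume U ^ (p⁻¹).toReal * (ENNReal.ofReal (C * h ^ ((r : ℝ) - (m : ℝ))) *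
        ((c * (volume U) ^ (-1 : ℝ)) *
          (sobSemi r q U (pf P) * volume U ^ (1 - (q⁻¹).toReal)))) := by gcongr
    _ = _ := by ring
end
end

section
/- For every dimension N ≥ 1, every exponent p ∈ [1, +∞), and every ϱ > 0, there exists a constant C > 0 depending only on N, p and ϱ such that: for every nondegenerate simplex T ⊆ ℝ^N (the interior of the convex hull of N+1 affinely independent points) with diameter h_T and inradius r_T satisfying ϱ·h_T ≤ r_T, and every function w that is continuously differentiable on an open neighbourhood of the closure of T, the continuous trace inequality h_T^{1/p} · ‖w‖_{L^p(∂T, μ)} ≤ C · ( ‖w‖_{L^p(T)} + h_T · ‖∇w‖_{L^p(T; ℝ^N)} ) holds, where μ is the (N−1)-dimensional Hausdorff measure on the topological boundary ∂T of T. -/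
open MeasureTheory Metric
open scoped ENNReal

noncomputable section

lemma trace_one_dim (P : ℝ) (hP : 1 ≤ P) (δ : ℝ) (hδ1 : δ ≤ 1)
    (u u' : ℝ → ℝ) (hu : ∀ t ∈ Set.Icc 0 δ, HasDerivAt u (u' t) t)
    (hu' : ContinuousOn u' (Set.Icc 0 δ)) :
    ENNReal.ofReal δ * ‖u 0‖ₑ ^ P ≤ 2 ^ (P - 1) *
      (∫⁻ t in Set.Icc 0 δ, (‖u t‖ₑ ^ P + ‖u' t‖ₑ ^ P)) := by
  have hP0 : 0 < P := by linarith
  set I := ∫⁻ t in Set.Icc 0 δ, ‖u' t‖ₑ with hI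
  set J := ∫⁻ t in Set.Icc 0 δ, ‖u' t‖ₑ ^ P with hJ
  have hvol : volume (Set.Icc 0 δ) = ENNReal.ofReal δ := by simp
  have hae : AEStronglyMeasurable u' (volume.restrict (Set.Icc 0 δ)) :=
    hu'.aestronglyMeasurable measurableSet_Icc
  have hIJ : I ^ P ≤ J := by
    have h := eLpNorm_le_eLpNorm_mul_rpow_measure_univ (p := 1) (q := ENNReal.ofReal P)
      (μ := volume.restrict (Set.Icc 0 δ)) (by simpa using hP) hae
    rw [eLpNorm_one_eq_lintegral_enorm,
      eLpNorm_eq_lintegral_rpow_enorm_toReal (by simpa using hP0) (by simp),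
      ENNReal.toReal_ofReal hP0.le, Measure.restrict_apply_univ, hvol] at h
    have h1 : ENNReal.ofReal δ ^ (1 / (1:ℝ≥0∞).toReal - 1 / P) ≤ 1 := by
      apply ENNReal.rpow_le_one (by simpa using hδ1)
      have : 1 / P ≤ 1 := by rw [div_le_one hP0]; exact hP
      simpa using this
    have h2 : I ≤ J ^ (1 / P) := h.trans (by simpa using mul_le_mul_right h1 _)
    calc I ^ P ≤ (J ^ (1 / P)) ^ P := by gcongr
      _ = J := by rw [← ENNReal.rpow_mul]; simp [hP0.ne']
  have hpt : ∀ t ∈ Set.Icc 0 δ, ‖u 0‖ₑ ^ P ≤ 2 ^ (P - 1) * (‖u t‖ₑ ^ P + J) := by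
    intro t ht
    have hsub : Set.Icc 0 t ⊆ Set.Icc 0 δ := Set.Icc_subset_Icc le_rfl ht.2
    have hftc : ∫ s in (0:ℝ)..t, u' s = u t - u 0 := by
      apply intervalIntegral.integral_eq_sub_of_hasDerivAt
      · intro x hx
        rw [Set.uIcc_of_le ht.1] at hx
        exact hu x (hsub hx)
      · apply ContinuousOn.intervalIntegrable
        rw [Set.uIcc_of_le ht.1]
        exact hu'.mono hsub
    have h1 : ‖u t - u 0‖ₑ ≤ I := by
      rw [← hftc, intervalIntegral.integral_of_le ht.1]
      refine (enorm_integral_le_lintegral_enorm _).trans ?_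
      exact lintegral_mono_set (Set.Ioc_subset_Icc_self.trans hsub)
    have h2 : ‖u 0‖ₑ ≤ ‖u t‖ₑ + I := by
      have : u 0 = u t - (u t - u 0) := by ring
      calc ‖u 0‖ₑ = ‖u t - (u t - u 0)‖ₑ := by rw [← this]
        _ ≤ ‖u t‖ₑ + ‖u t - u 0‖ₑ := enorm_sub_le
        _ ≤ _ := by gcongr
    calc ‖u 0‖ₑ ^ P ≤ (‖u t‖ₑ + I) ^ P := by gcongr
      _ ≤ 2 ^ (P - 1) * (‖u t‖ₑ ^ P + I ^ P) := ENNReal.rpow_add_le_mul_rpow_add_rpow _ _ hP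
      _ ≤ _ := by gcongr
  have hum : AEMeasurable (fun t => ‖u t‖ₑ ^ P) (volume.restrict (Set.Icc 0 δ)) := by
    have : ContinuousOn u (Set.Icc 0 δ) := fun t ht => (hu t ht).continuousAt.continuousWithinAt
    exact (this.aestronglyMeasurable measurableSet_Icc).enorm.pow_const _
  have h2t : (2:ℝ≥0∞) ^ (P - 1) ≠ ⊤ := ENNReal.rpow_ne_top_of_nonneg (by linarith) (by simp)
  calc ENNReal.ofReal δ * ‖u 0‖ₑ ^ P = ∫⁻ t in Set.Icc 0 δ, ‖u 0‖ₑ ^ P := by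
        rw [setLIntegral_const, hvol, mul_comm]
    _ ≤ ∫⁻ t in Set.Icc 0 δ, 2 ^ (P - 1) * (‖u t‖ₑ ^ P + J) :=
        setLIntegral_mono' measurableSet_Icc hpt
    _ = 2 ^ (P - 1) * ((∫⁻ t in Set.Icc 0 δ, ‖u t‖ₑ ^ P) + J * ENNReal.ofReal δ) := by
        rw [lintegral_const_mul' _ _ h2t, lintegral_add_left' hum, setLIntegral_const, hvol]
    _ ≤ 2 ^ (P - 1) * ((∫⁻ t in Set.Icc 0 δ, ‖u t‖ₑ ^ P) + J) := by
        gcongr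
        simpa using mul_le_mul_right (ENNReal.ofReal_le_one.2 hδ1) J
    _ = _ := by rw [lintegral_add_left' hum]

lemma haus_piece {E : Type*} [NormedAddCommGroup E] [MeasurableSpace E] [BorelSpace E]
    (M : ℕ) (K : NNReal) (g : (Fin M → ℝ) → E) (hg : LipschitzWith K g)
    (S : Set (Fin M → ℝ)) (G : E → ℝ≥0∞) :
    ∫⁻ z in g '' S, G z ∂(μH[(M:ℝ)]) ≤ (K : ℝ≥0∞) ^ M * ∫⁻ y in S, G (g y) := by
  have hgm : Measurable g := hg.continuous.measurable
  have hle : (μH[(M:ℝ)]).restrict (g '' S) ≤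
      (K : ℝ≥0∞) ^ M • Measure.map g (volume.restrict S) := by
    rw [Measure.le_iff]
    intro B hB
    rw [Measure.restrict_apply hB, Measure.smul_apply, Measure.map_apply hgm hB,
      Measure.restrict_apply (hgm hB)]
    have : B ∩ g '' S = g '' (g ⁻¹' B ∩ S) := by
      exact (Set.image_preimage_inter g S B).symm
    rw [this]
    have h := hg.hausdorffMeasure_image_le (d := (M:ℝ)) (by positivity) (g ⁻¹' B ∩ S)
    have h2 : (μH[(M:ℝ)] : Measure (Fin M → ℝ)) = volume := by
      have := hausdorffMeasure_pi_real (ι := Fin M)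
      simpa using this
    rw [h2, ENNReal.rpow_natCast] at h
    exact h
  calc _ ≤ ∫⁻ z, G z ∂((K : ℝ≥0∞) ^ M • Measure.map g (volume.restrict S)) :=
        lintegral_mono' hle le_rfl
    _ = (K : ℝ≥0∞) ^ M * ∫⁻ z, G z ∂(Measure.map g (volume.restrict S)) := by
        rw [lintegral_smul_measure, smul_eq_mul]
    _ ≤ _ := by gcongr; exact lintegral_map_le _ _

lemma affine_change {N : ℕ} (L : (Fin N → ℝ) ≃L[ℝ] EuclideanSpace ℝ (Fin N))
    (v : EuclideanSpace ℝ (Fin N)) (K : Set (EuclideanSpace ℝ (Fin N)))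
    (hK : MeasurableSet K) (hK1 : ∀ x, v + L x ∈ K → x ∈ Set.Icc (0 : Fin N → ℝ) 1)
    (G : EuclideanSpace ℝ (Fin N) → ℝ≥0∞) (hG : Measurable G) :
    volume K * ∫⁻ x, G (v + L x) ≤ ∫⁻ z, G z := by
  set ν := Measure.map L volume with hν
  have : ν.IsAddHaarMeasure := ContinuousLinearEquiv.isAddHaarMeasure_map L volume
  have hc := Measure.isAddLeftInvariant_eq_smul ν volume
  set c := ν.addHaarScalarFactor volume
  have key : ∀ H : EuclideanSpace ℝ (Fin N) → ℝ≥0∞, Measurable H →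
      ∫⁻ x, H (v + L x) = c * ∫⁻ z, H z := by
    intro H hH
    have h1 : ∫⁻ x, H (v + L x) = ∫⁻ z, H (v + z) ∂ν := by
      rw [hν, lintegral_map (by fun_prop) L.continuous.measurable]
    rw [h1, hc, lintegral_smul_measure, lintegral_add_left_eq_self]
    rfl
  have hcK : c * volume K ≤ 1 := by
    have := key (K.indicator 1) (measurable_one.indicator hK)
    rw [lintegral_indicator_one hK] at this
    rw [← this]
    calc _ ≤ ∫⁻ x, (Set.Icc (0 : Fin N → ℝ) 1).indicator 1 x := by
          apply lintegral_mono
          intro x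
          by_cases hx : v + L x ∈ K
          · simp [hx, hK1 x hx, -Set.mem_Icc]
          · simp [hx]
      _ = 1 := by
          rw [lintegral_indicator_one measurableSet_Icc, Real.volume_Icc_pi]; simp
  rw [key G hG, ← mul_assoc, mul_comm (volume K)]
  calc _ ≤ 1 * ∫⁻ z, G z := by gcongr
    _ = _ := one_mul _

lemma simplex_chart {M : ℕ} (b : AffineBasis (Fin (M + 2)) ℝ (EuclideanSpace ℝ (Fin (M + 1))))
    (j : Fin (M + 2)) :
    ∃ L : (Fin (M + 1) → ℝ) ≃L[ℝ] EuclideanSpace ℝ (Fin (M + 1)),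
      (∀ x, L x = ∑ a, x a • (b (j.succAbove a) - b j)) ∧
      (∀ z, b j + L (fun a => b.coord (j.succAbove a) z) = z) ∧
      (∀ x a, b.coord (j.succAbove a) (b j + L x) = x a) := by
  let L0 : (Fin (M + 1) → ℝ) →ₗ[ℝ] EuclideanSpace ℝ (Fin (M + 1)) :=
    Fintype.linearCombination ℝ (fun a => b (j.succAbove a) - b j)
  have hL0 : ∀ x, L0 x = ∑ a, x a • (b (j.succAbove a) - b j) := fun x => by
    simp [L0, Fintype.linearCombination_apply]
  have hinv : ∀ z, b j + L0 (fun a => b.coord (j.succAbove a) z) = z := by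
    intro z
    have h1 := b.linear_combination_coord_eq_self z
    have h2 := b.sum_coord_apply_eq_one z
    rw [Fin.sum_univ_succAbove _ j] at h1 h2
    rw [hL0]
    simp only [smul_sub, Finset.sum_sub_distrib, ← Finset.sum_smul]
    have h3 : ∑ i, b.coord (j.succAbove i) z = 1 - b.coord j z := by linarith
    rw [h3, sub_smul, one_smul]
    conv_rhs => rw [← h1]
    abel
  have hsurj : Function.Surjective L0 := by
    intro z
    refine ⟨_, add_left_cancel (a := b j) ((hinv (b j + z)))⟩
  have hinj : Function.Injective L0 := by
    rw [LinearMap.injective_iff_surjective_of_finrank_eq_finrank]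
    · exact hsurj
    · simp
  let L := (LinearEquiv.ofBijective L0 ⟨hinj, hsurj⟩).toContinuousLinearEquiv
  have hL : ∀ x, L x = L0 x := fun x => rfl
  refine ⟨L, fun x => by rw [hL, hL0], fun z => by rw [hL, hinv], fun x a => ?_⟩
  have := hinv (b j + L x)
  have h2 := hinj (add_left_cancel this)
  exact congrFun h2 a

lemma trace_piece {M : ℕ} (b : AffineBasis (Fin (M + 2)) ℝ (EuclideanSpace ℝ (Fin (M + 1))))
    (P : ℝ) (hP : 1 ≤ P) (h : ℝ) (hh : ∀ i j, ‖b i - b j‖ ≤ h)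
    (w : EuclideanSpace ℝ (Fin (M + 1)) → ℝ) (V : Set (EuclideanSpace ℝ (Fin (M + 1))))
    (hV : IsOpen V) (K : Set (EuclideanSpace ℝ (Fin (M + 1))))
    (hK : K = convexHull ℝ (Set.range b)) (hKV : K ⊆ V) (hw : ContDiffOn ℝ 1 w V)
    (i j : Fin (M + 2)) (hij : i ≠ j) (δ : ℝ) (hδ0 : 0 ≤ δ) (hδ1 : δ ≤ 1) :
    ENNReal.ofReal δ * volume K *
      ∫⁻ z in {z | z ∈ K ∧ b.coord i z = 0 ∧ δ ≤ b.coord j z}, ‖w z‖ₑ ^ P ∂(μH[(M:ℝ)])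
    ≤ ENNReal.ofReal ((M + 1) * h) ^ M * 2 ^ (P - 1) *
      ((∫⁻ z in K, ‖w z‖ₑ ^ P) + ENNReal.ofReal h ^ P * ∫⁻ z in K, ‖fderiv ℝ w z‖ₑ ^ P) := by
  have hh0 : 0 ≤ h := (norm_nonneg _).trans (hh 0 0)
  have hP0 : 0 ≤ P := by linarith
  have hKcl : IsClosed K := by
    rw [hK]; exact ((Set.finite_range b).isCompact_convexHull (𝕜 := ℝ)).isClosed
  have hKm := hKcl.measurableSet
  have hmem : ∀ z, z ∈ K ↔ ∀ i, 0 ≤ b.coord i z := fun z => by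
    rw [hK, b.convexHull_eq_nonneg_coord]; rfl
  obtain ⟨L, hL, hinv, hco⟩ := simplex_chart b j
  obtain ⟨i', rfl⟩ := Fin.exists_succAbove_eq hij
  have hcj : ∀ x, b.coord j (b j + L x) = 1 - ∑ a, x a := by
    intro x
    have := b.sum_coord_apply_eq_one (b j + L x)
    rw [Fin.sum_univ_succAbove _ j] at this
    simp only [hco] at this
    linarith
  have hmemA : ∀ x, b j + L x ∈ K ↔ (∀ a, 0 ≤ x a) ∧ ∑ a, x a ≤ 1 := by
    intro x
    rw [hmem, Fin.forall_iff_succAbove j]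
    simp only [hco, hcj]
    constructor
    · rintro ⟨h1, h2⟩; exact ⟨h2, by linarith⟩
    · rintro ⟨h1, h2⟩; exact ⟨by linarith, h1⟩
  let A : ℝ → (Fin M → ℝ) → EuclideanSpace ℝ (Fin (M + 1)) :=
    fun t y => b j + L (i'.insertNth (α := fun _ => ℝ) t y)
  set e := b (j.succAbove i') - b j with he
  have hA : ∀ t y, A t y = b j + (t • e + ∑ k, y k • (b (j.succAbove (i'.succAbove k)) - b j)) := by
    intro t y
    simp only [A, hL, Fin.sum_univ_succAbove _ i', Fin.insertNth_apply_same,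
      Fin.insertNth_apply_succAbove, he]
  have hAK : ∀ t y, A t y ∈ K ↔ (0 ≤ t ∧ ∀ k, 0 ≤ y k) ∧ t + ∑ k, y k ≤ 1 := by
    intro t y
    simp only [A, hmemA, Fin.forall_iff_succAbove i', Fin.sum_univ_succAbove _ i',
      Fin.insertNth_apply_same, Fin.insertNth_apply_succAbove]
  let S : Set (Fin M → ℝ) := {y | (∀ k, 0 ≤ y k) ∧ ∑ k, y k ≤ 1 - δ}
  have hSm : MeasurableSet S := by
    apply IsClosed.measurableSet
    have h1 : IsClosed {y : Fin M → ℝ | ∀ k, 0 ≤ y k} := by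
      have : {y : Fin M → ℝ | ∀ k, 0 ≤ y k} = Set.Ici 0 := by
        ext y; simp [Pi.le_def]
      rw [this]; exact isClosed_Ici
    have h2 : IsClosed {y : Fin M → ℝ | ∑ k, y k ≤ 1 - δ} :=
      isClosed_le (by fun_prop) continuous_const
    exact h1.inter h2
  have hLip : LipschitzWith (Real.toNNReal ((M + 1) * h)) (A 0) := by
    apply LipschitzWith.of_dist_le_mul
    intro y y'
    rw [dist_eq_norm, hA, hA, Real.coe_toNNReal _ (by positivity)]
    have : b j + ((0:ℝ) • e + ∑ k, y k • (b (j.succAbove (i'.succAbove k)) - b j)) -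
        (b j + ((0:ℝ) • e + ∑ k, y' k • (b (j.succAbove (i'.succAbove k)) - b j)))
        = ∑ k, (y k - y' k) • (b (j.succAbove (i'.succAbove k)) - b j) := by
      simp only [sub_smul, Finset.sum_sub_distrib]; abel
    rw [this]
    calc _ ≤ ∑ k, ‖(y k - y' k) • (b (j.succAbove (i'.succAbove k)) - b j)‖ := norm_sum_le _ _
      _ ≤ ∑ k : Fin M, dist y y' * h := by
          apply Finset.sum_le_sum
          intro k _
          rw [norm_smul]
          gcongr
          · exact (dist_le_pi_dist y y' k)
          · exact hh _ _
      _ = M * h * dist y y' := by simp; ring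
      _ ≤ _ := by gcongr; linarith
  have himg : {z | z ∈ K ∧ b.coord (j.succAbove i') z = 0 ∧ δ ≤ b.coord j z} ⊆ A 0 '' S := by
    rintro z ⟨hz, hz0, hzδ⟩
    have hx := hinv z
    refine ⟨fun k => b.coord (j.succAbove (i'.succAbove k)) z, ⟨fun k => (hmem z).1 hz _, ?_⟩, ?_⟩
    · have := b.sum_coord_apply_eq_one z
      rw [Fin.sum_univ_succAbove _ j, Fin.sum_univ_succAbove _ i', hz0] at this
      linarith
    · rw [hA]
      conv_rhs => rw [← hx, hL, Fin.sum_univ_succAbove _ i', hz0]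
  let W : EuclideanSpace ℝ (Fin (M + 1)) → ℝ≥0∞ := K.indicator fun z => ‖w z‖ₑ ^ P
  let D : EuclideanSpace ℝ (Fin (M + 1)) → ℝ≥0∞ := K.indicator fun z => ‖fderiv ℝ w z‖ₑ ^ P
  have hwc : ContinuousOn w K := hw.continuousOn.mono hKV
  have hdc : ContinuousOn (fderiv ℝ w) K :=
    (hw.continuousOn_fderiv_of_isOpen hV le_rfl).mono hKV
  have hWm : Measurable W := by
    classical
    have : W = K.piecewise (fun z => ‖w z‖ₑ ^ P) 0 := by
      ext z; simp [W, Set.piecewise, Set.indicator]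
    rw [this]
    exact ContinuousOn.measurable_piecewise
      ((ENNReal.continuous_rpow_const.comp continuous_enorm).comp_continuousOn hwc)
      continuousOn_const hKm
  have hDm : Measurable D := by
    classical
    have : D = K.piecewise (fun z => ‖fderiv ℝ w z‖ₑ ^ P) 0 := by
      ext z; simp [D, Set.piecewise, Set.indicator]
    rw [this]
    exact ContinuousOn.measurable_piecewise
      ((ENNReal.continuous_rpow_const.comp continuous_enorm).comp_continuousOn hdc)
      continuousOn_const hKm
  let G : EuclideanSpace ℝ (Fin (M + 1)) → ℝ≥0∞ := fun z => W z + ENNReal.ofReal h ^ P * D z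
  have hGm : Measurable G := hWm.add (hDm.const_mul _)
  have hfib : ∀ y ∈ S, ENNReal.ofReal δ * ‖w (A 0 y)‖ₑ ^ P ≤ 2 ^ (P - 1) * ∫⁻ t, G (A t y) := by
    intro y hy
    have hin : ∀ t ∈ Set.Icc 0 δ, A t y ∈ K := fun t ht =>
      (hAK t y).2 ⟨⟨ht.1, hy.1⟩, by linarith [hy.2, ht.2]⟩
    have hAd : ∀ t, HasDerivAt (fun t => A t y) e t := by
      intro t
      have h1 : (fun t => A t y) = fun t =>
        b j + (t • e + ∑ k, y k • (b (j.succAbove (i'.succAbove k)) - b j)) := by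
          ext1 t; exact hA t y
      rw [h1]
      have := (((hasDerivAt_id t).smul_const e).add_const
        (∑ k, y k • (b (j.succAbove (i'.succAbove k)) - b j))).const_add (b j)
      simpa using this
    have h1 := trace_one_dim P hP δ hδ1 (fun t => w (A t y)) (fun t => fderiv ℝ w (A t y) e)
      (by
        intro t ht
        have hd : DifferentiableAt ℝ w (A t y) :=
          (hw.differentiableOn (by simp)).differentiableAt (hV.mem_nhds (hKV (hin t ht)))
        exact hd.hasFDerivAt.comp_hasDerivAt t (hAd t))
      (by
        have hc : ContinuousOn (fun t => A t y) (Set.Icc 0 δ) :=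
          fun t _ => (hAd t).continuousAt.continuousWithinAt
        exact (hdc.comp hc hin).clm_apply continuousOn_const)
    refine h1.trans ?_
    refine mul_le_mul_right ?_ _
    refine le_trans ?_ (setLIntegral_le_lintegral (Set.Icc 0 δ) _)
    apply setLIntegral_mono' measurableSet_Icc
    intro t ht
    simp only [G, W, D, Set.indicator_of_mem (hin t ht)]
    gcongr
    rw [← ENNReal.mul_rpow_of_nonneg _ _ hP0]
    gcongr
    rw [mul_comm]
    refine (ContinuousLinearMap.le_opENorm _ _).trans ?_
    gcongr
    rw [← ofReal_norm]
    exact ENNReal.ofReal_le_ofReal (hh _ _)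
  have h2t : (2:ℝ≥0∞) ^ (P - 1) ≠ ⊤ := ENNReal.rpow_ne_top_of_nonneg (by linarith) (by simp)
  have hfub : ∫⁻ y, ∫⁻ t, G (A t y) = ∫⁻ x, G (b j + L x) := by
    have hmp := (volume_preserving_piFinSuccAbove (fun _ : Fin (M + 1) => ℝ) i').symm
    have hm : Measurable (fun x : Fin (M + 1) → ℝ => G (b j + L x)) :=
      hGm.comp (by fun_prop)
    rw [← hmp.lintegral_comp hm]
    have hm2 : Measurable fun a => G (b j + L ((MeasurableEquiv.piFinSuccAbove
        (fun _ : Fin (M + 1) => ℝ) i').symm a)) := hm.comp hmp.measurable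
    rw [Measure.volume_eq_prod, lintegral_prod_symm _ hm2.aemeasurable]
    rfl
  have hch := affine_change L (b j) K hKm (by
    intro x hx
    rw [hmemA] at hx
    refine ⟨hx.1, fun a => ?_⟩
    exact (Finset.single_le_sum (fun k _ => hx.1 k) (Finset.mem_univ a)).trans hx.2) G hGm
  have hGint : ∫⁻ z, G z = (∫⁻ z in K, ‖w z‖ₑ ^ P) +
      ENNReal.ofReal h ^ P * ∫⁻ z in K, ‖fderiv ℝ w z‖ₑ ^ P := by
    simp only [G]
    rw [lintegral_add_left hWm, lintegral_const_mul _ hDm, lintegral_indicator hKm,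
      lintegral_indicator hKm]
  have hsurf : ∫⁻ z in {z | z ∈ K ∧ b.coord (j.succAbove i') z = 0 ∧ δ ≤ b.coord j z},
      ‖w z‖ₑ ^ P ∂(μH[(M:ℝ)])
      ≤ ENNReal.ofReal ((M + 1) * h) ^ M * ∫⁻ y in S, ‖w (A 0 y)‖ₑ ^ P :=
    (lintegral_mono_set himg).trans (haus_piece M _ (A 0) hLip S _)
  have hSint : ENNReal.ofReal δ * ∫⁻ y in S, ‖w (A 0 y)‖ₑ ^ P ≤
      2 ^ (P - 1) * ∫⁻ x, G (b j + L x) := by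
    rw [← lintegral_const_mul' _ _ ENNReal.ofReal_ne_top, ← hfub,
      ← lintegral_const_mul' _ _ h2t]
    exact (setLIntegral_mono' hSm hfib).trans (setLIntegral_le_lintegral _ _)
  calc _ ≤ ENNReal.ofReal δ * volume K *
        (ENNReal.ofReal ((M + 1) * h) ^ M * ∫⁻ y in S, ‖w (A 0 y)‖ₑ ^ P) := by gcongr
    _ = ENNReal.ofReal ((M + 1) * h) ^ M * volume K *
        (ENNReal.ofReal δ * ∫⁻ y in S, ‖w (A 0 y)‖ₑ ^ P) := by ring
    _ ≤ ENNReal.ofReal ((M + 1) * h) ^ M * volume K * (2 ^ (P - 1) * ∫⁻ x, G (b j + L x)) := by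
        gcongr
    _ = ENNReal.ofReal ((M + 1) * h) ^ M * 2 ^ (P - 1) * (volume K * ∫⁻ x, G (b j + L x)) := by
        ring
    _ ≤ _ := by rw [← hGint]; gcongr

lemma trace_total {M : ℕ} (b : AffineBasis (Fin (M + 2)) ℝ (EuclideanSpace ℝ (Fin (M + 1))))
    (P : ℝ) (hP : 1 ≤ P) (h : ℝ) (hh0 : 0 < h) (hh : ∀ i j, ‖b i - b j‖ ≤ h)
    (w : EuclideanSpace ℝ (Fin (M + 1)) → ℝ) (V : Set (EuclideanSpace ℝ (Fin (M + 1))))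
    (hV : IsOpen V) (K : Set (EuclideanSpace ℝ (Fin (M + 1))))
    (hK : K = convexHull ℝ (Set.range b)) (hKV : K ⊆ V) (hw : ContDiffOn ℝ 1 w V)
    (κ : ℝ) (hκ : 0 < κ) (hvol : ENNReal.ofReal (κ * h ^ (M + 1)) ≤ volume K) :
    ENNReal.ofReal h * ∫⁻ z in frontier K, ‖w z‖ₑ ^ P ∂(μH[(M:ℝ)])
    ≤ ENNReal.ofReal ((M + 2) ^ 2 * ((M + 1) ^ (M + 1) * 2 ^ (P - 1) / κ)) *
      ((∫⁻ z in K, ‖w z‖ₑ ^ P) + ENNReal.ofReal h ^ P * ∫⁻ z in K, ‖fderiv ℝ w z‖ₑ ^ P) := by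
  set Y := (∫⁻ z in K, ‖w z‖ₑ ^ P) + ENNReal.ofReal h ^ P * ∫⁻ z in K, ‖fderiv ℝ w z‖ₑ ^ P
  set C1 : ℝ := (M + 1) ^ (M + 1) * 2 ^ (P - 1) / κ with hC1
  have hC10 : 0 < C1 := by positivity
  let δ : ℝ := 1 / (M + 1)
  have hδ0 : 0 < δ := by positivity
  have hδ1 : δ ≤ 1 := by
    rw [div_le_one (by positivity)]; linarith [(Nat.cast_nonneg M : (0:ℝ) ≤ M)]
  let F : {q : Fin (M + 2) × Fin (M + 2) // q.1 ≠ q.2} → Set (EuclideanSpace ℝ (Fin (M + 1))) :=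
    fun q => {z | z ∈ K ∧ b.coord q.1.1 z = 0 ∧ δ ≤ b.coord q.1.2 z}
  have hpiece : ∀ q, ENNReal.ofReal h * ∫⁻ z in F q, ‖w z‖ₑ ^ P ∂(μH[(M:ℝ)])
      ≤ ENNReal.ofReal C1 * Y := by
    intro q
    have h1 := trace_piece b P hP h hh w V hV K hK hKV hw q.1.1 q.1.2 q.2 δ hδ0.le hδ1
    change _ * ∫⁻ z in F q, _ ∂_ ≤ _ * Y at h1
    set X := ∫⁻ z in F q, ‖w z‖ₑ ^ P ∂(μH[(M:ℝ)])
    have h2 : ENNReal.ofReal (δ * (κ * h ^ (M + 1))) * X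
        ≤ ENNReal.ofReal (((M + 1) * h) ^ M * 2 ^ (P - 1)) * Y := by
      rw [ENNReal.ofReal_mul hδ0.le, ENNReal.ofReal_mul (by positivity : 0 ≤ (((M:ℝ) + 1) * h) ^ M),
        ENNReal.ofReal_pow (by positivity), ← ENNReal.ofReal_rpow_of_pos (by norm_num),
        ENNReal.ofReal_ofNat]
      refine le_trans ?_ h1
      gcongr
    have h3 : ENNReal.ofReal h =
        ENNReal.ofReal (1 / (δ * κ * h ^ M)) * ENNReal.ofReal (δ * (κ * h ^ (M + 1))) := by
      rw [← ENNReal.ofReal_mul (by positivity)]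
      congr 1
      field_simp
      ring
    have h4 : ENNReal.ofReal C1 =
        ENNReal.ofReal (1 / (δ * κ * h ^ M)) *
          ENNReal.ofReal (((M + 1) * h) ^ M * 2 ^ (P - 1)) := by
      rw [← ENNReal.ofReal_mul (by positivity)]
      congr 1
      simp only [hC1, δ, mul_pow]
      field_simp
      ring
    calc _ = ENNReal.ofReal (1 / (δ * κ * h ^ M)) *
          (ENNReal.ofReal (δ * (κ * h ^ (M + 1))) * X) := by rw [h3]; ring
      _ ≤ ENNReal.ofReal (1 / (δ * κ * h ^ M)) *
          (ENNReal.ofReal (((M + 1) * h) ^ M * 2 ^ (P - 1)) * Y) := by gcongr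
      _ = _ := by rw [h4]; ring
  have hcover : frontier K ⊆ ⋃ q, F q := by
    intro z hz
    have hKcl : IsClosed K := by
      rw [hK]; exact ((Set.finite_range b).isCompact_convexHull (𝕜 := ℝ)).isClosed
    rw [hKcl.frontier_eq] at hz
    have hzK := hz.1
    have hz2 := hz.2
    have hzK' : ∀ i, 0 ≤ b.coord i z := by
      have := hzK
      rw [hK, b.convexHull_eq_nonneg_coord] at this
      exact this
    rw [hK, b.interior_convexHull] at hz2
    have hz3 : ¬ ∀ i, 0 < b.coord i z := hz2
    push Not at hz3
    obtain ⟨i, hi⟩ := hz3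
    have hi0 : b.coord i z = 0 := le_antisymm hi (hzK' i)
    have hex : ∃ a, δ ≤ b.coord (i.succAbove a) z := by
      by_contra! hcon
      have hs := b.sum_coord_apply_eq_one z
      rw [Fin.sum_univ_succAbove _ i, hi0, zero_add] at hs
      have : ∑ a, b.coord (i.succAbove a) z < ∑ a : Fin (M + 1), δ :=
        Finset.sum_lt_sum_of_nonempty Finset.univ_nonempty fun a _ => hcon a
      rw [hs] at this
      simp only [Finset.sum_const, Finset.card_univ, Fintype.card_fin, nsmul_eq_mul, δ] at this
      push_cast at this
      rw [mul_one_div_cancel (by positivity)] at this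
      exact lt_irrefl _ this
    obtain ⟨a, ha⟩ := hex
    exact Set.mem_iUnion.2 ⟨⟨(i, i.succAbove a), (Fin.succAbove_ne i a).symm⟩, hzK, hi0, ha⟩
  calc _ ≤ ENNReal.ofReal h * ∑ q, ∫⁻ z in F q, ‖w z‖ₑ ^ P ∂(μH[(M:ℝ)]) := by
        gcongr
        refine (lintegral_mono_set hcover).trans ((lintegral_iUnion_le _ _).trans ?_)
        rw [tsum_fintype]
    _ = ∑ q, ENNReal.ofReal h * ∫⁻ z in F q, ‖w z‖ₑ ^ P ∂(μH[(M:ℝ)]) := Finset.mul_sum _ _ _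
    _ ≤ ∑ q : {q : Fin (M + 2) × Fin (M + 2) // q.1 ≠ q.2}, ENNReal.ofReal C1 * Y :=
        Finset.sum_le_sum fun q _ => hpiece q
    _ = (Fintype.card {q : Fin (M + 2) × Fin (M + 2) // q.1 ≠ q.2} : ℝ≥0∞) *
          (ENNReal.ofReal C1 * Y) := by simp
    _ ≤ (((M + 2) ^ 2 : ℕ) : ℝ≥0∞) * (ENNReal.ofReal C1 * Y) := by
        gcongr
        refine (Fintype.card_subtype_le _).trans ?_
        simp [sq]
    _ = _ := by
        rw [ENNReal.ofReal_mul (by positivity), mul_assoc]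
        congr 1
        rw [← ENNReal.ofReal_natCast]
        push_cast
        rfl

/-- Continuous trace inequality on nondegenerate simplices:
`h_T^{1/p} ‖w‖_{L^p(∂T)} ≤ C (‖w‖_{L^p(T)} + h_T ‖∇w‖_{L^p(T)})`. -/
theorem continuous_trace_inequality_simplex
    (N : ℕ) (hN : 1 ≤ N) (p : ℝ≥0∞) (hp : 1 ≤ p) (hp' : p ≠ ⊤) (ϱ : ℝ) (hϱ : 0 < ϱ) :
    ∃ C : ℝ, 0 < C ∧
      ∀ (f : Fin (N + 1) → EuclideanSpace ℝ (Fin N)), AffineIndependent ℝ f →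
      ∀ T : Set (EuclideanSpace ℝ (Fin N)),
        T = interior (convexHull ℝ (Set.range f)) →
        ϱ * Metric.diam T ≤ sSup {r : ℝ | ∃ x, Metric.ball x r ⊆ T} →
      ∀ (w : EuclideanSpace ℝ (Fin N) → ℝ) (V : Set (EuclideanSpace ℝ (Fin N))),
        IsOpen V → closure T ⊆ V → ContDiffOn ℝ 1 w V →
        ENNReal.ofReal (Metric.diam T ^ (1 / p.toReal)) *
            eLpNorm w p ((μH[(N : ℝ) - 1]).restrict (frontier T))
          ≤ ENNReal.ofReal C *
            (eLpNorm w p (volume.restrict T) +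
              ENNReal.ofReal (Metric.diam T) *
                eLpNorm (fun x => gradient w x) p (volume.restrict T)) := by
  obtain ⟨M, rfl⟩ : ∃ M, N = M + 1 := ⟨N - 1, by omega⟩
  have hp0 : p ≠ 0 := (zero_lt_one.trans_le hp).ne'
  set P := p.toReal with hPdef
  have hP : 1 ≤ P := by
    have := ENNReal.toReal_mono hp' hp
    simpa using this
  have hP0 : 0 < P := by linarith
  set ω : ℝ := (volume (ball (0 : EuclideanSpace ℝ (Fin (M + 1))) 1)).toReal with hω
  have hω0 : 0 < ω := ENNReal.toReal_pos (measure_ball_pos _ _ one_pos).ne' measure_ball_lt_top.ne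
  let κ : ℝ := (ϱ / 2) ^ (M + 1) * ω
  have hκ : 0 < κ := by positivity
  let C0 : ℝ := (M + 2) ^ 2 * ((M + 1) ^ (M + 1) * 2 ^ (P - 1) / κ)
  have hC0 : 0 < C0 := by positivity
  refine ⟨C0 ^ (1 / P), by positivity, ?_⟩
  intro f hf T hT hr w V hV hTV hw
  have htop : affineSpan ℝ (Set.range f) = ⊤ := by
    rw [hf.affineSpan_eq_top_iff_card_eq_finrank_add_one]; simp
  let b : AffineBasis (Fin (M + 2)) ℝ (EuclideanSpace ℝ (Fin (M + 1))) := ⟨f, hf, htop⟩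
  have hbf : ⇑b = f := rfl
  set K := convexHull ℝ (Set.range f) with hK
  have hKconv : Convex ℝ K := convex_convexHull ℝ _
  have hKcomp : IsCompact K := (Set.finite_range f).isCompact_convexHull (𝕜 := ℝ)
  have hint : (interior K).Nonempty := interior_convexHull_nonempty_iff_affineSpan_eq_top.2 htop
  have hclT : closure T = K := by
    rw [hT, hKconv.closure_interior_eq_closure_of_nonempty_interior hint,
      hKcomp.isClosed.closure_eq]
  have hTK : T ⊆ K := hT ▸ interior_subset
  have hTo : IsOpen T := hT ▸ isOpen_interior
  have hfr : frontier T = frontier K := by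
    rw [hTo.frontier_eq, hclT, hKcomp.isClosed.frontier_eq, hT]
  have hdiam : diam T = diam (Set.range f) := by
    rw [← Metric.diam_closure, hclT, hK, convexHull_diam]
  set h := diam T with hhdef
  have hh : ∀ i j, ‖b i - b j‖ ≤ h := by
    intro i j
    rw [← dist_eq_norm, hdiam]
    exact dist_le_diam_of_mem (Set.finite_range f).isBounded (Set.mem_range_self i)
      (Set.mem_range_self j)
  have hh0 : 0 < h := by
    refine lt_of_lt_of_le ?_ (hh 0 1)
    rw [norm_pos_iff, sub_ne_zero]
    intro h01
    have := hf.injective h01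
    simp at this
  have hvol : ENNReal.ofReal (κ * h ^ (M + 1)) ≤ volume K := by
    have hlt : ϱ / 2 * h < sSup {r : ℝ | ∃ x, Metric.ball x r ⊆ T} :=
      lt_of_lt_of_le (by nlinarith [mul_pos hϱ hh0]) hr
    have hne : {r : ℝ | ∃ x, Metric.ball x r ⊆ T}.Nonempty := ⟨0, 0, by simp⟩
    obtain ⟨r, ⟨x, hx⟩, hr2⟩ := exists_lt_of_lt_csSup hne hlt
    have hsub : ball x (ϱ / 2 * h) ⊆ K := (ball_subset_ball hr2.le).trans (hx.trans hTK)
    refine le_trans (le_of_eq ?_) (measure_mono hsub)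
    rw [Measure.addHaar_ball _ _ (by positivity)]
    rw [← ENNReal.ofReal_toReal (measure_ball_lt_top (x := (0 : EuclideanSpace ℝ (Fin (M + 1)))) (μ := volume) (r := 1)).ne, ← hω,
      ← ENNReal.ofReal_mul (by positivity)]
    congr 1
    simp only [κ, finrank_euclideanSpace, Fintype.card_fin]
    ring
  have hmain := trace_total b P hP h hh0 hh w V hV K rfl (hclT ▸ hTV) hw κ hκ hvol
  have hae : volume.restrict K = volume.restrict T := by
    apply Measure.restrict_congr_set
    rw [hT]
    have h0 : volume (frontier K) = 0 := hKconv.addHaar_frontier volume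
    exact (interior_ae_eq_of_null_frontier h0).symm
  rw [hae] at hmain
  have hN1 : ((M + 1 : ℕ) : ℝ) - 1 = M := by push_cast; ring
  have hgr : ∀ x, ‖gradient w x‖ₑ = ‖fderiv ℝ w x‖ₑ := by
    intro x
    rw [← ofReal_norm, ← ofReal_norm]
    simp [gradient]
  rw [hN1, hfr, eLpNorm_eq_lintegral_rpow_enorm_toReal hp0 hp',
    eLpNorm_eq_lintegral_rpow_enorm_toReal hp0 hp',
    eLpNorm_eq_lintegral_rpow_enorm_toReal hp0 hp']
  simp only [hgr, ← hPdef]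
  set X := ∫⁻ z in frontier K, ‖w z‖ₑ ^ P ∂(μH[(M:ℝ)])
  set a := ∫⁻ z in T, ‖w z‖ₑ ^ P
  set d := ∫⁻ z in T, ‖fderiv ℝ w z‖ₑ ^ P
  have hroot : ∀ x : ℝ≥0∞, (x ^ (1 / P)) ^ P = x := fun x => by
    rw [← ENNReal.rpow_mul]; simp [hP0.ne']
  have hY : a + ENNReal.ofReal h ^ P * d ≤ (a ^ (1 / P) + ENNReal.ofReal h * d ^ (1 / P)) ^ P := by
    refine le_trans (le_of_eq ?_) (ENNReal.add_rpow_le_rpow_add _ _ hP)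
    rw [ENNReal.mul_rpow_of_nonneg _ _ hP0.le, hroot, hroot]
  have h1P : 0 ≤ 1 / P := by positivity
  calc _ = (ENNReal.ofReal h * X) ^ (1 / P) := by
        rw [ENNReal.mul_rpow_of_nonneg _ _ h1P, ENNReal.ofReal_rpow_of_pos hh0]
    _ ≤ (ENNReal.ofReal C0 * (a ^ (1 / P) + ENNReal.ofReal h * d ^ (1 / P)) ^ P) ^ (1 / P) := by
        apply ENNReal.rpow_le_rpow _ h1P
        exact hmain.trans (mul_le_mul_right hY _)
    _ = _ := by
        rw [ENNReal.mul_rpow_of_nonneg _ _ h1P, ENNReal.ofReal_rpow_of_pos hC0,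
          ← ENNReal.rpow_mul, mul_one_div_cancel hP0.ne', ENNReal.rpow_one]
end
end
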